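/- arXiv:1707.06726 — 2 statements merged into one kernel-verified Lean document; each statement's English description precedes it below -/
import Mathlib

section
/- Let n be a positive integer, λ_1,…,λ_n positive reals, τ > 0, and f_1,…,f_n : ℝ → ℝ continuous, with f_j satisfying positive feedback for 1 ≤ j ≤ n−1, f_n satisfying negative feedback, and f_n(x) ≤ M for some M > 0 and all x. Assume each f_j is differentiable in a neighborhood of 0 with derivative f_j′ Hölder continuous with some exponent α ∈ (0,1] there, and f_j′(0) ≠ 0. Set a = −f_1′(0)·f_2′(0)·⋯·f_n′(0) (so a > 0). If the characteristic equation (z+λ_1)(z+λ_2)⋯(z+λ_n) + a·e^{−τz} = 0 has no real roots, then every solution of the cyclic system oscillates about zero: for every solution x = (x_1,…,x_n) on [0,∞), every index j and every s ≥ 0, there exists t ≥ s with x_j(t) = 0. -/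
/-- A solution of the cyclic system with delay on `[T, ∞)` (0-indexed components
`x 0, …, x (n-1)`). -/
def IsCyclicSolution (n : ℕ) (lam : ℕ → ℝ) (τ : ℝ) (f : ℕ → ℝ → ℝ)
    (T : ℝ) (x : ℕ → ℝ → ℝ) : Prop :=
  ContinuousOn (x 0) (Set.Ici (T - τ)) ∧
  (∀ j < n, ContinuousOn (x j) (Set.Ici T)) ∧
  ∀ t : ℝ, T < t →
    (∀ j : ℕ, j + 1 < n →
      HasDerivAt (x j) (-lam j * x j t + f j (x (j + 1) t)) t) ∧
    HasDerivAt (x (n - 1)) (-lam (n - 1) * x (n - 1) t + f (n - 1) (x 0 (t - τ))) t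

/-!
If some component of a solution has no zeros beyond some time, the feedback conditions propagate
this around the cycle; after changing signs all components are eventually positive, and the negative
feedback makes them tend to `0`. From then on each component is driven by the next one through the
asymptotically linear equation `x_j' + λ_j x_j = (d_j + o(1)) x_{j+1}(t - δ_j)`, where
`d_j = f_j'(0)` and `δ_j` is `0` or `τ`. Because the driving term has a fixed sign, the Laplace
integrals `∫ e^{-st} x_j` of all the components have the same abscissa of convergence `z`, and `z`
is finite: decay faster than every exponential would, around the cycle, bound `e^{pτ}` by a
polynomial in `p`. Averaging the equations against weights that behave like `e^{-zt}`, but whose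
integrals against the components tend to infinity, shows that the average of `x_{j+1}` over that of
`x_j` tends to `(z + λ_j) / (d_j e^{-zδ_j})`. The product of these quotients around the cycle is
`1`, so `z` is a real root of the characteristic equation.
-/

open Set Filter Topology MeasureTheory Asymptotics

section IntegratingFactor

variable {u : ℝ → ℝ} {c T : ℝ}

theorem hasDerivAt_exp_const_mul (c t : ℝ) :
    HasDerivAt (fun t ↦ Real.exp (c * t)) (c * Real.exp (c * t)) t := by
  simpa [mul_comm] using ((hasDerivAt_id t).const_mul c).exp

theorem hasDerivAt_exp_mul {t : ℝ} (hu : DifferentiableAt ℝ u t) :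
    HasDerivAt (fun t ↦ Real.exp (c * t) * u t) (Real.exp (c * t) * (deriv u t + c * u t)) t :=
  ((hasDerivAt_exp_const_mul c t).mul hu.hasDerivAt).congr_deriv (by ring)

theorem monotoneOn_exp_mul (hd : ∀ t ≥ T, DifferentiableAt ℝ u t)
    (h : ∀ t ≥ T, 0 ≤ deriv u t + c * u t) :
    MonotoneOn (fun t ↦ Real.exp (c * t) * u t) (Ici T) := by
  have hder (t : ℝ) (ht : T ≤ t) := hasDerivAt_exp_mul (c := c) (hd t ht)
  exact monotoneOn_of_hasDerivWithinAt_nonneg (convex_Ici T)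
    (fun t ht ↦ (hder t ht).continuousAt.continuousWithinAt)
    (fun t ht ↦ (hder t (interior_subset ht)).hasDerivWithinAt)
    (fun t ht ↦ mul_nonneg (Real.exp_nonneg _) (h t (interior_subset ht)))

theorem exp_neg_mul_le_of_deriv_add_mul_nonneg (hd : ∀ t ≥ T, DifferentiableAt ℝ u t)
    (h : ∀ t ≥ T, 0 ≤ deriv u t + c * u t) {t : ℝ} (ht : T ≤ t) :
    Real.exp (-c * (t - T)) * u T ≤ u t := by
  have hmono := monotoneOn_exp_mul hd h self_mem_Ici ht ht
  calc Real.exp (-c * (t - T)) * u T = Real.exp (-c * t) * (Real.exp (c * T) * u T) := by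
        rw [← mul_assoc, ← Real.exp_add]
        ring_nf
    _ ≤ Real.exp (-c * t) * (Real.exp (c * t) * u t) := by gcongr
    _ = u t := by rw [← mul_assoc, ← Real.exp_add, neg_mul, neg_add_cancel, Real.exp_zero, one_mul]

theorem le_exp_neg_mul_of_deriv_add_mul_nonpos (hd : ∀ t ≥ T, DifferentiableAt ℝ u t)
    (h : ∀ t ≥ T, deriv u t + c * u t ≤ 0) {t : ℝ} (ht : T ≤ t) :
    u t ≤ Real.exp (-c * (t - T)) * u T := by
  have hneg := exp_neg_mul_le_of_deriv_add_mul_nonneg (u := -u) (c := c)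
    (fun t ht ↦ (hd t ht).neg)
    (fun t ht ↦ by rw [deriv.neg, Pi.neg_apply]; linarith [h t ht]) ht
  simpa using hneg

end IntegratingFactor

section HalfLineIntegrals

theorem integrableOn_Ioi_comp_sub_right_iff {g : ℝ → ℝ} {T δ : ℝ} :
    IntegrableOn (fun t ↦ g (t - δ)) (Ioi T) ↔ IntegrableOn g (Ioi (T - δ)) := by
  have h := (measurePreserving_sub_right volume δ).integrableOn_comp_preimage
    (MeasurableEquiv.subRight δ).measurableEmbedding (f := g) (s := Ioi (T - δ))
  simpa [preimage_sub_const_Ioi, Function.comp_def] using h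

theorem integral_Ioi_comp_sub_right (g : ℝ → ℝ) (T δ : ℝ) :
    ∫ t in Ioi T, g (t - δ) = ∫ t in Ioi (T - δ), g t := by
  have h := (measurePreserving_sub_right volume δ).setIntegral_preimage_emb
    (MeasurableEquiv.subRight δ).measurableEmbedding g (Ioi (T - δ))
  simpa [preimage_sub_const_Ioi] using h

theorem integrableOn_Ioi_of_integrableAtFilter {g : ℝ → ℝ} {T : ℝ} (hg : ContinuousOn g (Ici T))
    (h : IntegrableAtFilter g atTop) : IntegrableOn g (Ioi T) :=
  (integrableOn_Ici_iff_integrableAtFilter_atTop.2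
    ⟨h, hg.locallyIntegrableOn measurableSet_Ici⟩).mono_set Ioi_subset_Ici_self

theorem not_integrableOn_Ioi_of_le {g : ℝ → ℝ} {T c : ℝ} (hc : 0 < c) (h : ∀ t > T, c ≤ g t) :
    ¬ IntegrableOn g (Ioi T) := by
  intro hg
  have hconst : IntegrableOn (fun _ : ℝ ↦ c) (Ioi T) := by
    refine Integrable.mono' hg aestronglyMeasurable_const ?_
    filter_upwards [ae_restrict_mem measurableSet_Ioi] with t ht
    simpa [abs_of_pos hc] using h t ht
  simp [integrableOn_const_iff, hc.ne'] at hconst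

theorem frequently_lt_of_integrableAtFilter {g : ℝ → ℝ} {c : ℝ} (hc : 0 < c)
    (hg : IntegrableAtFilter g atTop) : ∃ᶠ t in atTop, g t < c := by
  rw [Filter.Frequently, eventually_atTop]
  rintro ⟨T, hT⟩
  obtain ⟨S, hS⟩ := integrableAtFilter_atTop_iff.1 hg
  exact not_integrableOn_Ioi_of_le hc
    (fun t ht ↦ not_lt.1 (hT t ((le_max_left T S).trans (le_of_lt ht))))
    (hS.mono_set (Ioi_subset_Ici (le_max_right T S)))

theorem integrableAtFilter_of_hasDerivAt_of_nonneg {G G' : ℝ → ℝ} {K : ℝ}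
    (hd : ∀ᶠ t in atTop, HasDerivAt G (G' t) t) (hG' : ∀ᶠ t in atTop, 0 ≤ G' t)
    (hK : ∃ᶠ t in atTop, G t ≤ K) : IntegrableAtFilter G' atTop := by
  obtain ⟨T, hT⟩ := eventually_atTop.1 (hd.and hG')
  have hmono : MonotoneOn G (Ici T) :=
    monotoneOn_of_hasDerivWithinAt_nonneg (convex_Ici T)
      (fun t ht ↦ (hT t ht).1.continuousAt.continuousWithinAt)
      (fun t ht ↦ (hT t (interior_subset ht)).1.hasDerivWithinAt)
      (fun t ht ↦ (hT t (interior_subset ht)).2)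
  have hbdd (t : ℝ) (ht : T ≤ t) : G t ≤ K := by
    obtain ⟨r, hr, htr⟩ := (hK.and_eventually (eventually_ge_atTop t)).exists
    exact (hmono ht (ht.trans htr) htr).trans hr
  obtain ⟨l, hl⟩ : ∃ l, Tendsto G atTop (𝓝 l) := by
    have hlim := tendsto_atTop_ciSup (f := fun t ↦ G (max T t))
      (fun s t hst ↦ hmono (le_max_left T s) (le_max_left T t) (max_le_max_left T hst))
      ⟨K, forall_mem_range.2 fun t ↦ hbdd _ (le_max_left T t)⟩
    refine ⟨_, hlim.congr' ?_⟩
    filter_upwards [eventually_ge_atTop T] with t ht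
    rw [max_eq_right ht]
  exact ⟨Ioi T, Ioi_mem_atTop T, integrableOn_Ioi_deriv_of_nonneg'
    (fun t ht ↦ (hT t ht).1) (fun t ht ↦ (hT t (le_of_lt ht)).2) hl⟩

/- The hypothesis says that `g + c ∫ g` is monotone; it is frequently bounded because `g` is
frequently small. -/
theorem integrableAtFilter_of_hasDerivAt_of_add_mul_nonneg {g g' : ℝ → ℝ} {c : ℝ}
    (hd : ∀ᶠ t in atTop, HasDerivAt g (g' t) t) (hg : IntegrableAtFilter g atTop)
    (h : ∀ᶠ t in atTop, 0 ≤ g' t + c * g t) : IntegrableAtFilter g' atTop := by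
  obtain ⟨S, hS⟩ := integrableAtFilter_atTop_iff.1 hg
  obtain ⟨T, hT⟩ := eventually_atTop.1 (hd.and (eventually_ge_atTop S))
  have hgT : IntegrableOn g (Ioi T) :=
    hS.mono_set (Ioi_subset_Ici_self.trans (Ici_subset_Ici.2 (hT T le_rfl).2))
  have hgc : ContinuousOn g (Ioi T) := fun t ht ↦
    (hT t (le_of_lt ht)).1.continuousAt.continuousWithinAt
  have hprim : ∀ᶠ t in atTop,
      HasDerivAt (fun t ↦ g t + c * ∫ s in T..t, g s) (g' t + c * g t) t := by
    filter_upwards [eventually_gt_atTop T] with t ht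
    exact (hT t ht.le).1.add <| (intervalIntegral.integral_hasDerivAt_right
      ((intervalIntegrable_iff_integrableOn_Ioc_of_le ht.le).2
        (hgT.mono_set Ioc_subset_Ioi_self))
      (hgc.stronglyMeasurableAtFilter isOpen_Ioi t ht)
      (hT t ht.le).1.continuousAt).const_mul c
  have hbdd (t : ℝ) (ht : T ≤ t) : c * ∫ s in T..t, g s ≤ |c| * ∫ s in Ioi T, ‖g s‖ := by
    refine (le_abs_self _).trans ?_
    rw [abs_mul, intervalIntegral.integral_of_le ht]
    gcongr
    exact (norm_integral_le_integral_norm _).trans <| setIntegral_mono_set hgT.norm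
      (ae_of_all _ fun _ ↦ norm_nonneg _) Ioc_subset_Ioi_self.eventuallyLE
  have hint : IntegrableAtFilter (fun t ↦ g' t + c * g t) atTop :=
    integrableAtFilter_of_hasDerivAt_of_nonneg hprim h
      (((frequently_lt_of_integrableAtFilter one_pos hg).and_eventually
        (eventually_ge_atTop T)).mono fun t ht ↦ add_le_add ht.1.le (hbdd t ht.2))
  simpa [Pi.sub_def, Pi.smul_def] using hint.sub (IntegrableAtFilter.smul hg c)

theorem integral_Ioi_mul_deriv_eq_neg {w u : ℝ → ℝ} {T : ℝ} (hw : Differentiable ℝ w)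
    (hu : ∀ t ≥ T, DifferentiableAt ℝ u t) (hwu : IntegrableOn (fun t ↦ w t * u t) (Ioi T))
    (hw'u : IntegrableOn (fun t ↦ deriv w t * u t) (Ioi T))
    (hwu' : IntegrableOn (fun t ↦ w t * deriv u t) (Ioi T)) :
    ∫ t in Ioi T, w t * deriv u t = -(w T * u T) - ∫ t in Ioi T, deriv w t * u t := by
  have hderiv (t : ℝ) (ht : T ≤ t) :
      HasDerivAt (fun t ↦ w t * u t) (deriv w t * u t + w t * deriv u t) t :=
    (hw t).hasDerivAt.mul (hu t ht).hasDerivAt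
  have hlim := tendsto_zero_of_hasDerivAt_of_integrableOn_Ioi
    (fun t ht ↦ hderiv t (le_of_lt ht)) (hw'u.add hwu') hwu
  have hsum := integral_Ioi_of_hasDerivAt_of_tendsto' hderiv (hw'u.add hwu') hlim
  rw [integral_add hw'u hwu'] at hsum
  linarith

end HalfLineIntegrals

section LaplaceConvergence

/-- Absolute convergence of the Laplace integral `∫ e^{-st} u(t) dt` at infinity; for an eventually
positive `u` this is the same as convergence. -/
def LaplaceConverges (u : ℝ → ℝ) (s : ℝ) : Prop :=
  IntegrableAtFilter (fun t ↦ Real.exp (-s * t) * u t) atTop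

theorem LaplaceConverges.mono {u : ℝ → ℝ} {s r : ℝ} (h : LaplaceConverges u s) (hsr : s ≤ r) :
    LaplaceConverges u r := by
  obtain ⟨T, hT⟩ := integrableAtFilter_atTop_iff.1 h
  refine ⟨_, Ici_mem_atTop (max T 0), ?_⟩
  have hbdd : ∀ᵐ t ∂volume.restrict (Ici (max T 0)), ‖Real.exp (-(r - s) * t)‖ ≤ 1 := by
    filter_upwards [ae_restrict_mem measurableSet_Ici] with t ht
    rw [Real.norm_of_nonneg (Real.exp_nonneg _), Real.exp_le_one_iff]
    nlinarith [(le_max_right T 0).trans ht]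
  refine (Integrable.bdd_mul (hT.mono_set (Ici_subset_Ici.2 (le_max_left T 0)))
    (by fun_prop) hbdd).congr (ae_of_all _ fun t ↦ ?_)
  simp only [← mul_assoc, ← Real.exp_add]
  ring_nf

theorem LaplaceConverges.of_isBigO_one {u : ℝ → ℝ} {s T : ℝ} (hs : 0 < s)
    (hc : ContinuousOn u (Ici T)) (hu : u =O[atTop] (fun _ ↦ (1 : ℝ))) :
    LaplaceConverges u s := by
  have hO : (fun t ↦ Real.exp (-s * t) * u t) =O[atTop] fun t ↦ Real.exp (-s * t) := by
    simpa using (isBigO_refl (fun t : ℝ ↦ Real.exp (-s * t)) atTop).mul hu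
  refine hO.integrableAtFilter ⟨Ici T, Ici_mem_atTop T, ?_⟩
    ⟨_, Ioi_mem_atTop 0, exp_neg_integrableOn_Ioi 0 hs⟩
  exact ContinuousOn.aestronglyMeasurable (by fun_prop) measurableSet_Ici

theorem exists_abscissa {u : ℝ → ℝ} {r s : ℝ} (hr : ¬ LaplaceConverges u r)
    (hs : LaplaceConverges u s) :
    ∃ z, (∀ s < z, ¬ LaplaceConverges u s) ∧ ∀ s > z, LaplaceConverges u s := by
  have hbdd : BddBelow {s | LaplaceConverges u s} :=
    ⟨r, fun s hs ↦ le_of_not_ge fun hsr ↦ hr (hs.mono hsr)⟩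
  refine ⟨sInf {s | LaplaceConverges u s},
    fun t ht ↦ notMem_of_lt_csInf (s := {s | LaplaceConverges u s}) ht hbdd, fun t ht ↦ ?_⟩
  obtain ⟨p, hp, hpt⟩ := exists_lt_of_csInf_lt ⟨s, hs⟩ ht
  exact hp.mono hpt.le

end LaplaceConvergence

section DrivenPairs

/-- `u` is a positive function on `[T, ∞)` driven by the positive function `v` through the
asymptotically linear delay equation `u'(t) + lam * u(t) = (C + o(1)) * v(t - δ)`. The last field
fixes the sign of the right-hand side already from time `T` on. -/
structure IsDrivenFrom (T lam C δ : ℝ) (u v : ℝ → ℝ) : Prop where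
  gain_ne_zero : C ≠ 0
  delay_nonneg : 0 ≤ δ
  pos : ∀ t ≥ T, 0 < u t
  differentiableAt : ∀ t ≥ T, DifferentiableAt ℝ u t
  driver_pos : ∀ t ≥ T - δ, 0 < v t
  driver_continuousOn : ContinuousOn v (Ici (T - δ))
  isLittleO : (fun t ↦ deriv u t + lam * u t - C * v (t - δ)) =o[atTop] fun t ↦ v (t - δ)
  abs_sub_le : ∀ t ≥ T, |deriv u t + lam * u t - C * v (t - δ)| ≤ |C| / 2 * v (t - δ)

namespace IsDrivenFrom

variable {T lam C δ s : ℝ} {u v : ℝ → ℝ}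

theorem continuousOn (h : IsDrivenFrom T lam C δ u v) : ContinuousOn u (Ici T) := fun t ht ↦
  (h.differentiableAt t ht).continuousAt.continuousWithinAt

theorem delayed_driver_pos (h : IsDrivenFrom T lam C δ u v) {t : ℝ} (ht : T ≤ t) :
    0 < v (t - δ) :=
  h.driver_pos _ (sub_le_sub_right ht δ)

theorem continuousOn_delayed_driver (h : IsDrivenFrom T lam C δ u v) :
    ContinuousOn (fun t ↦ v (t - δ)) (Ici T) :=
  h.driver_continuousOn.comp (by fun_prop) fun _ ht ↦ sub_le_sub_right (mem_Ici.1 ht) δ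

theorem driver_le_gain_mul (h : IsDrivenFrom T lam C δ u v) {t : ℝ} (ht : T ≤ t) :
    C ^ 2 / 2 * v (t - δ) ≤ C * (deriv u t + lam * u t) := by
  have hbound : |C * (deriv u t + lam * u t - C * v (t - δ))| ≤ C ^ 2 / 2 * v (t - δ) := by
    rw [abs_mul, ← sq_abs C]
    nlinarith [abs_nonneg C, h.abs_sub_le t ht]
  linarith [(abs_le.1 hbound).1]

theorem abs_deriv_add_le (h : IsDrivenFrom T lam C δ u v) {t : ℝ} (ht : T ≤ t) :
    |deriv u t + lam * u t| ≤ 3 / 2 * |C| * v (t - δ) := by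
  have hsum := abs_add_le (deriv u t + lam * u t - C * v (t - δ)) (C * v (t - δ))
  rw [sub_add_cancel, abs_mul, abs_of_pos (h.delayed_driver_pos ht)] at hsum
  linarith [h.abs_sub_le t ht]

/- `e^{-st} C (u' + lam u)` is nonnegative and equals `g' + (lam + s) g` for the integrable function
`g = C e^{-st} u`. -/
theorem integrableAtFilter_forcing (h : IsDrivenFrom T lam C δ u v) (hu : LaplaceConverges u s) :
    IntegrableAtFilter (fun t ↦ Real.exp (-s * t) * (C * (deriv u t + lam * u t))) atTop := by
  have hg : IntegrableAtFilter (fun t ↦ C * (Real.exp (-s * t) * u t)) atTop :=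
    IntegrableAtFilter.smul hu C
  have hder (t : ℝ) (ht : T ≤ t) : HasDerivAt (fun t ↦ C * (Real.exp (-s * t) * u t))
      (C * (Real.exp (-s * t) * (deriv u t + -s * u t))) t :=
    (hasDerivAt_exp_mul (h.differentiableAt t ht)).const_mul C
  have hforcing (t : ℝ) : C * (Real.exp (-s * t) * (deriv u t + -s * u t)) +
      (lam + s) * (C * (Real.exp (-s * t) * u t)) =
        Real.exp (-s * t) * (C * (deriv u t + lam * u t)) := by ring
  have hnonneg : ∀ᶠ t in atTop, 0 ≤ Real.exp (-s * t) * (C * (deriv u t + lam * u t)) := by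
    filter_upwards [eventually_ge_atTop T] with t ht
    have := h.delayed_driver_pos ht
    exact mul_nonneg (Real.exp_nonneg _) (le_trans (by positivity) (h.driver_le_gain_mul ht))
  have hg' := integrableAtFilter_of_hasDerivAt_of_add_mul_nonneg (c := lam + s)
    ((eventually_ge_atTop T).mono hder) hg (by simpa only [hforcing] using hnonneg)
  simpa only [Pi.add_def, Pi.smul_def, smul_eq_mul, hforcing] using
    hg'.add (IntegrableAtFilter.smul hg (lam + s))

theorem laplaceConverges_driver (h : IsDrivenFrom T lam C δ u v) (hu : LaplaceConverges u s) :
    LaplaceConverges v s := by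
  have hC := h.gain_ne_zero
  have hO : (fun t ↦ Real.exp (-s * t) * v (t - δ)) =O[atTop]
      fun t ↦ Real.exp (-s * t) * (C * (deriv u t + lam * u t)) := by
    refine IsBigO.of_bound (2 / C ^ 2) ?_
    filter_upwards [eventually_ge_atTop T] with t ht
    have hv := h.delayed_driver_pos ht
    rw [norm_mul, norm_mul, mul_left_comm, Real.norm_of_nonneg hv.le]
    gcongr
    refine le_trans ?_ (mul_le_mul_of_nonneg_left
      ((h.driver_le_gain_mul ht).trans (le_abs_self _)) (by positivity))
    field_simp
    exact le_rfl
  have hmeas : ContinuousOn (fun t ↦ Real.exp (-s * t) * v (t - δ)) (Ici T) :=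
    ContinuousOn.mul (by fun_prop) h.continuousOn_delayed_driver
  obtain ⟨S, hS⟩ := integrableAtFilter_atTop_iff.1 <| hO.integrableAtFilter
    ⟨_, Ici_mem_atTop T, hmeas.aestronglyMeasurable measurableSet_Ici⟩
    (h.integrableAtFilter_forcing hu)
  refine ⟨_, Ioi_mem_atTop (S - δ), integrableOn_Ioi_comp_sub_right_iff.1 <|
    IntegrableOn.congr_fun ((hS.mono_set Ioi_subset_Ici_self).const_mul (Real.exp (s * δ)))
      (fun t _ ↦ ?_) measurableSet_Ioi⟩
  simp only [← mul_assoc, ← Real.exp_add]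
  ring_nf

variable {w : ℝ → ℝ}

theorem integrableOn_mul_forcing (h : IsDrivenFrom T lam C δ u v) (hw : Continuous w)
    (hw0 : ∀ t, 0 ≤ w t) (hwv : IntegrableOn (fun t ↦ w t * v (t - δ)) (Ioi T)) :
    IntegrableOn (fun t ↦ w t * (deriv u t + lam * u t)) (Ioi T) := by
  have hmeas : AEStronglyMeasurable u (volume.restrict (Ioi T)) :=
    (h.continuousOn.mono Ioi_subset_Ici_self).aestronglyMeasurable measurableSet_Ioi
  refine Integrable.mono' (hwv.const_mul (3 / 2 * |C|)) (hw.aestronglyMeasurable.mul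
    ((measurable_deriv u).aestronglyMeasurable.add (hmeas.const_mul lam))) ?_
  filter_upwards [ae_restrict_mem measurableSet_Ioi] with t ht
  rw [norm_mul, Real.norm_of_nonneg (hw0 t), mul_left_comm]
  exact mul_le_mul_of_nonneg_left (h.abs_deriv_add_le (le_of_lt ht)) (hw0 t)

theorem integral_driver_le_gain_mul (h : IsDrivenFrom T lam C δ u v) (hw : Continuous w)
    (hw0 : ∀ t, 0 ≤ w t) (hwv : IntegrableOn (fun t ↦ w t * v (t - δ)) (Ioi T)) :
    C ^ 2 / 2 * ∫ t in Ioi T, w t * v (t - δ) ≤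
      C * ∫ t in Ioi T, w t * (deriv u t + lam * u t) := by
  simp only [← integral_const_mul]
  refine setIntegral_mono_on (hwv.const_mul _)
    ((h.integrableOn_mul_forcing hw hw0 hwv).const_mul C) measurableSet_Ioi fun t ht ↦ ?_
  rw [mul_left_comm, mul_left_comm C]
  exact mul_le_mul_of_nonneg_left (h.driver_le_gain_mul (le_of_lt ht)) (hw0 t)

theorem integral_mul_forcing (h : IsDrivenFrom T lam C δ u v) (hw : Differentiable ℝ w)
    (hw0 : ∀ t, 0 ≤ w t) (hwv : IntegrableOn (fun t ↦ w t * v (t - δ)) (Ioi T))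
    (hwu : IntegrableOn (fun t ↦ w t * u t) (Ioi T))
    (hw'u : IntegrableOn (fun t ↦ deriv w t * u t) (Ioi T)) :
    ∫ t in Ioi T, w t * (deriv u t + lam * u t) =
      lam * (∫ t in Ioi T, w t * u t) - (∫ t in Ioi T, deriv w t * u t) - w T * u T := by
  have hforcing := h.integrableOn_mul_forcing hw.continuous hw0 hwv
  have hwu' : IntegrableOn (fun t ↦ w t * deriv u t) (Ioi T) :=
    (hforcing.sub (hwu.const_mul lam)).congr (ae_of_all _ fun t ↦ by simp only [Pi.sub_apply]; ring)
  have hparts := integral_Ioi_mul_deriv_eq_neg hw h.differentiableAt hwu hw'u hwu'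
  have hsum : ∫ t in Ioi T, w t * (deriv u t + lam * u t) =
      (∫ t in Ioi T, w t * deriv u t) + lam * ∫ t in Ioi T, w t * u t := by
    rw [← integral_const_mul, ← integral_add hwu' (hwu.const_mul lam)]
    exact integral_congr_ae (ae_of_all _ fun t ↦ by ring)
  linarith

theorem eventually_exp_mul_le_integral (h : IsDrivenFrom T lam C δ u v)
    (hu : ∀ p, IntegrableOn (fun t ↦ Real.exp (p * t) * u t) (Ioi T)) :
    ∀ᶠ p : ℝ in atTop, Real.exp (p * T) * u T ≤ ∫ t in Ioi T, Real.exp (p * t) * u t := by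
  have hsub : Ioc (T + 1) (T + 2) ⊆ Ioi T := fun t ht ↦ mem_Ioi.2 (by linarith [ht.1])
  have huT : IntegrableOn u (Ioc (T + 1) (T + 2)) := by simpa using (hu 0).mono_set hsub
  have hmass : 0 < ∫ t in Ioc (T + 1) (T + 2), u t := by
    rw [← intervalIntegral.integral_of_le (by linarith)]
    exact intervalIntegral.intervalIntegral_pos_of_pos_on
      ((intervalIntegrable_iff_integrableOn_Ioc_of_le (by linarith)).2 huT)
      (fun t ht ↦ h.pos t (by linarith [ht.1])) (by linarith)
  filter_upwards [eventually_ge_atTop 0, (Real.tendsto_exp_atTop.atTop_mul_const hmass)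
    |>.eventually_ge_atTop (u T)] with p hp hup
  calc Real.exp (p * T) * u T
      ≤ Real.exp (p * T) * (Real.exp p * ∫ t in Ioc (T + 1) (T + 2), u t) := by gcongr
    _ = ∫ t in Ioc (T + 1) (T + 2), Real.exp (p * (T + 1)) * u t := by
      rw [integral_const_mul, ← mul_assoc, ← Real.exp_add]
      ring_nf
    _ ≤ ∫ t in Ioc (T + 1) (T + 2), Real.exp (p * t) * u t := by
      refine setIntegral_mono_on (huT.const_mul _) ((hu p).mono_set hsub) measurableSet_Ioc
        fun t ht ↦ mul_le_mul_of_nonneg_right ?_ (h.pos t (by linarith [ht.1])).le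
      gcongr
      exact ht.1.le
    _ ≤ ∫ t in Ioi T, Real.exp (p * t) * u t := by
      refine setIntegral_mono_set (hu p) ?_ hsub.eventuallyLE
      filter_upwards [ae_restrict_mem measurableSet_Ioi] with t ht
      exact mul_nonneg (Real.exp_nonneg _) (h.pos t (le_of_lt ht)).le

theorem integral_exp_mul_delayed_driver_le (h : IsDrivenFrom T lam C δ u v)
    (hu : ∀ p, IntegrableOn (fun t ↦ Real.exp (p * t) * u t) (Ioi T))
    (hv : ∀ p, IntegrableOn (fun t ↦ Real.exp (p * t) * v (t - δ)) (Ioi T)) :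
    ∀ᶠ p : ℝ in atTop, C ^ 2 / 2 * ∫ t in Ioi T, Real.exp (p * t) * v (t - δ) ≤
      |C| * (p + |lam| + 1) * ∫ t in Ioi T, Real.exp (p * t) * u t := by
  filter_upwards [h.eventually_exp_mul_le_integral hu, eventually_ge_atTop 0] with p hbdry hp
  set I := ∫ t in Ioi T, Real.exp (p * t) * u t
  have hw : deriv (fun t ↦ Real.exp (p * t)) = fun t ↦ p * Real.exp (p * t) :=
    funext fun t ↦ (hasDerivAt_exp_const_mul p t).deriv
  have hforcing := h.integral_mul_forcing (w := fun t ↦ Real.exp (p * t)) (by fun_prop)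
    (fun t ↦ Real.exp_nonneg _) (hv p) (hu p)
    (by simpa only [IntegrableOn, hw, mul_assoc] using (hu p).const_mul p)
  simp only [hw, mul_assoc, integral_const_mul] at hforcing
  have hboundary := mul_nonneg (Real.exp_nonneg (p * T)) (h.pos T le_rfl).le
  calc C ^ 2 / 2 * ∫ t in Ioi T, Real.exp (p * t) * v (t - δ)
      ≤ C * ∫ t in Ioi T, Real.exp (p * t) * (deriv u t + lam * u t) :=
        h.integral_driver_le_gain_mul (by fun_prop) (fun t ↦ Real.exp_nonneg _) (hv p)
    _ ≤ |C| * |lam * I - p * I - Real.exp (p * T) * u T| := by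
        rw [← abs_mul, hforcing]
        exact le_abs_self _
    _ ≤ |C| * (p + |lam| + 1) * I := by
        rw [mul_assoc]
        gcongr
        refine abs_le.2 ⟨?_, ?_⟩ <;> nlinarith [neg_abs_le lam, le_abs_self lam]

theorem exp_mul_integral_driver_le (h : IsDrivenFrom T lam C δ u v)
    (hu : ∀ p, IntegrableOn (fun t ↦ Real.exp (p * t) * u t) (Ioi T))
    (hv : ∀ p, IntegrableOn (fun t ↦ Real.exp (p * t) * v t) (Ioi (T - δ))) :
    ∀ᶠ p : ℝ in atTop, C ^ 2 / 2 * Real.exp (p * δ) * ∫ t in Ioi T, Real.exp (p * t) * v t ≤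
      |C| * (p + |lam| + 1) * ∫ t in Ioi T, Real.exp (p * t) * u t := by
  have hshift (p t : ℝ) : Real.exp (p * t) * v (t - δ) =
      Real.exp (p * δ) * (Real.exp (p * (t - δ)) * v (t - δ)) := by
    rw [← mul_assoc, ← Real.exp_add]
    ring_nf
  have hdelayed (p : ℝ) : IntegrableOn (fun t ↦ Real.exp (p * t) * v (t - δ)) (Ioi T) := by
    simp only [hshift]
    exact (integrableOn_Ioi_comp_sub_right_iff.2 (hv p)).const_mul _
  filter_upwards [h.integral_exp_mul_delayed_driver_le hu hdelayed] with p hp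
  refine le_trans ?_ hp
  simp only [hshift, integral_const_mul]
  rw [integral_Ioi_comp_sub_right (fun t ↦ Real.exp (p * t) * v t), mul_assoc]
  gcongr ?_ * (?_ * ?_)
  refine setIntegral_mono_set (hv p) ?_ (Ioi_subset_Ioi (sub_le_self T h.delay_nonneg)).eventuallyLE
  filter_upwards [ae_restrict_mem measurableSet_Ioi] with t ht
  exact mul_nonneg (Real.exp_nonneg _) (h.driver_pos t (le_of_lt ht)).le

end IsDrivenFrom

end DrivenPairs

section Cycles

variable {n : ℕ} [NeZero n]

open scoped Fin.CommRing in
theorem forall_of_forall_add_one {P : Fin n → Prop} (hstep : ∀ j, P j → P (j + 1))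
    {i : Fin n} (hi : P i) (j : Fin n) : P j := by
  have hiter (m : ℕ) : P (i + (m : Fin n)) := by
    induction m with
    | zero => simpa using hi
    | succ m ih => simpa [add_assoc] using hstep _ ih
  simpa using hiter (j - i).val

theorem forall_of_forall_of_add_one {P : Fin n → Prop} (hstep : ∀ j, P (j + 1) → P j)
    {i : Fin n} (hi : P i) (j : Fin n) : P j :=
  of_not_not fun hj ↦ forall_of_forall_add_one (P := (¬ P ·)) (fun j ↦ mt (hstep j)) hj i hi

theorem prod_add_one {M : Type*} [CommMonoid M] (a : Fin n → M) :
    ∏ j, a (j + 1) = ∏ j, a j :=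
  Equiv.prod_comp (Equiv.addRight (1 : Fin n)) a

theorem tendsto_eval_mul_exp_neg (P : Polynomial ℝ) {D : ℝ} (hD : 0 < D) :
    Tendsto (fun p ↦ P.eval p * Real.exp (-D * p)) atTop (𝓝 0) := by
  have h := (P.comp (.C D⁻¹ * .X)).tendsto_div_exp_atTop.comp (tendsto_id.const_mul_atTop hD)
  refine h.congr fun p ↦ ?_
  simp [hD.ne', neg_mul, Real.exp_neg, div_eq_mul_inv]

/- Otherwise the integrals `I j` of `e^{pt} y j` are finite for all `p`, and multiplying the
estimates `c j e^{p δ j} I (j + 1) ≤ (p + b j) I j` around the cycle bounds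
`e^{p ∑ δ j}` by a polynomial in `p`. -/
theorem exists_not_laplaceConverges {T : ℝ} {lam C δ : Fin n → ℝ} {y : Fin n → ℝ → ℝ}
    (h : ∀ j, IsDrivenFrom T (lam j) (C j) (δ j) (y j) (y (j + 1))) (hδ : 0 < ∑ j, δ j) :
    ∃ s j, ¬ LaplaceConverges (y j) s := by
  by_contra! hconv
  have hint (j : Fin n) (p : ℝ) : IntegrableOn (fun t ↦ Real.exp (p * t) * y j t) (Ioi T) :=
    integrableOn_Ioi_of_integrableAtFilter (ContinuousOn.mul (by fun_prop) (h j).continuousOn)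
      (by simpa [LaplaceConverges] using hconv (-p) j)
  have hint' (j : Fin n) (p : ℝ) :
      IntegrableOn (fun t ↦ Real.exp (p * t) * y (j + 1) t) (Ioi (T - δ j)) :=
    integrableOn_Ioi_of_integrableAtFilter
      (ContinuousOn.mul (by fun_prop) (h j).driver_continuousOn)
      (by simpa [LaplaceConverges] using hconv (-p) (j + 1))
  set P : Polynomial ℝ := ∏ j, (.C |C j| * (.X + .C (|lam j| + 1)))
  have hgain : 0 < ∏ j, C j ^ 2 / 2 := Finset.prod_pos fun j _ ↦ by
    have := (h j).gain_ne_zero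
    positivity
  have hcycle : ∀ᶠ p in atTop,
      ∏ j, C j ^ 2 / 2 ≤ P.eval p * Real.exp (-(∑ j, δ j) * p) := by
    filter_upwards [eventually_all.2 fun j ↦ (h j).exp_mul_integral_driver_le (hint j) (hint' j),
      eventually_all.2 fun j ↦ (h j).eventually_exp_mul_le_integral (hint j)] with p hedge hbdry
    have hI (j : Fin n) : 0 < ∫ t in Ioi T, Real.exp (p * t) * y j t :=
      (mul_pos (Real.exp_pos _) ((h j).pos T le_rfl)).trans_le (hbdry j)
    have hprod := Finset.prod_le_prod (fun j _ ↦ mul_nonneg (by positivity) (hI (j + 1)).le)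
      fun j (_ : j ∈ Finset.univ) ↦ hedge j
    simp only [Finset.prod_mul_distrib,
      prod_add_one (fun j ↦ ∫ t in Ioi T, Real.exp (p * t) * y j t), ← Real.exp_sum] at hprod
    have hle := le_of_mul_le_mul_right hprod (Finset.prod_pos fun j _ ↦ hI j)
    rw [neg_mul, Real.exp_neg, ← div_eq_mul_inv, le_div_iff₀ (Real.exp_pos _), mul_comm _ p,
      Finset.mul_sum]
    simpa [P, Polynomial.eval_prod, Finset.prod_mul_distrib, add_assoc] using hle
  obtain ⟨p, hlt, hle⟩ :=
    (((tendsto_eval_mul_exp_neg P hδ).eventually_lt_const hgain).and hcycle).exists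
  exact hlt.not_ge hle

end Cycles

section NearlyExponentialWeights

/-- A family of positive weights which, along the filter `l`, satisfy `w' = (-z + o(1)) w` uniformly
on `ℝ`, and which are dominated by a common continuous function. They stand in for `e^{-zt}` when
the Laplace integral at `z` itself need not diverge. -/
structure IsNearlyExponential {ι : Type*} (z : ℝ) (l : Filter ι) (w : ι → ℝ → ℝ) : Prop where
  pos : ∀ i t, 0 < w i t
  differentiable : ∀ i, Differentiable ℝ (w i)
  abs_deriv_add_le : ∀ ε > 0, ∀ᶠ i in l, ∀ t, |deriv (w i) t + z * w i t| ≤ ε * w i t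
  exists_le : ∃ B : ℝ → ℝ, Continuous B ∧ ∀ i t, w i t ≤ B t

theorem eventually_integrableOn_of_tendsto_integral {ι : Type*} {l : Filter ι} {s : Set ℝ}
    {g : ι → ℝ → ℝ} (h : Tendsto (fun i ↦ ∫ t in s, g i t) l atTop) :
    ∀ᶠ i in l, IntegrableOn (g i) s := by
  filter_upwards [h.eventually_gt_atTop 0] with i hi
  by_contra hg
  exact hi.ne' (integral_undef hg)

theorem norm_integral_mul_le {w B φ ψ : ℝ → ℝ} {c M S T : ℝ} (hc : 0 ≤ c)
    (hw : ∀ t, 0 ≤ w t) (hwB : ∀ t, w t ≤ B t) (hB : Continuous B)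
    (hφ : ∀ t ≥ T, |φ t| ≤ M * ψ t) (hφS : ∀ t ≥ T, S < t → |φ t| ≤ c * ψ t)
    (hψ : ∀ t ≥ T, 0 ≤ ψ t) (hψc : ContinuousOn ψ (Ici T))
    (hwψ : IntegrableOn (fun t ↦ w t * ψ t) (Ioi T)) :
    ‖∫ t in Ioi T, w t * φ t‖ ≤
      c * (∫ t in Ioi T, w t * ψ t) + ∫ t in Ioc T S, M * (B t * ψ t) := by
  have hBψ : IntegrableOn ((Ioc T S).indicator fun t ↦ M * (B t * ψ t)) (Ioi T) := by
    refine (IntegrableOn.integrable_indicator ?_ measurableSet_Ioc).integrableOn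
    exact ((continuousOn_const.mul (hB.continuousOn.mul
      (hψc.mono Icc_subset_Ici_self))).integrableOn_Icc).mono_set Ioc_subset_Icc_self
  have hbound (t : ℝ) (ht : T < t) :
      ‖w t * φ t‖ ≤ c * (w t * ψ t) + (Ioc T S).indicator (fun t ↦ M * (B t * ψ t)) t := by
    rw [norm_mul, Real.norm_of_nonneg (hw t), Real.norm_eq_abs]
    by_cases htS : t ≤ S
    · rw [indicator_of_mem (show t ∈ Ioc T S from ⟨ht, htS⟩), mul_left_comm M]
      refine le_add_of_nonneg_of_le (mul_nonneg hc (mul_nonneg (hw t) (hψ t ht.le))) ?_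
      exact mul_le_mul (hwB t) (hφ t ht.le) (abs_nonneg _) ((hw t).trans (hwB t))
    · rw [indicator_of_notMem (fun h ↦ htS h.2), add_zero, mul_left_comm]
      exact mul_le_mul_of_nonneg_left (hφS t ht.le (not_le.1 htS)) (hw t)
  have hnorm := norm_integral_le_of_norm_le ((hwψ.const_mul c).add hBψ) <| by
    filter_upwards [ae_restrict_mem measurableSet_Ioi] with t ht using hbound t ht
  simp only [Pi.add_apply] at hnorm
  rwa [integral_add (hwψ.const_mul c) hBψ, integral_const_mul,
    setIntegral_indicator measurableSet_Ioc, inter_eq_right.2 Ioc_subset_Ioi_self] at hnorm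

theorem tendsto_div_of_isLittleO_sub {ι : Type*} {l : Filter ι} {f g : ι → ℝ} {c : ℝ}
    (h : (fun i ↦ f i - c * g i) =o[l] g) (hg : ∀ᶠ i in l, g i ≠ 0) :
    Tendsto (fun i ↦ f i / g i) l (𝓝 c) := by
  refine (by simpa using h.tendsto_div_nhds_zero.add_const c : Tendsto _ l (𝓝 c)).congr' ?_
  filter_upwards [hg] with i hi
  field_simp
  ring

namespace IsNearlyExponential

variable {ι : Type*} {l : Filter ι} {w : ι → ℝ → ℝ} {z T : ℝ} {φ ψ : ℝ → ℝ}

theorem continuous (hw : IsNearlyExponential z l w) (i : ι) : Continuous (w i) :=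
  (hw.differentiable i).continuous

/- A relation `φ = o(ψ)` at infinity passes to the averages, because a divergent average does not
see bounded intervals. -/
theorem isLittleO_integral (hw : IsNearlyExponential z l w) {M : ℝ}
    (hφψ : φ =o[atTop] ψ) (hφ : ∀ t ≥ T, |φ t| ≤ M * ψ t) (hψ : ∀ t ≥ T, 0 ≤ ψ t)
    (hψc : ContinuousOn ψ (Ici T)) (hdiv : Tendsto (fun i ↦ ∫ t in Ioi T, w i t * ψ t) l atTop) :
    (fun i ↦ ∫ t in Ioi T, w i t * φ t) =o[l] fun i ↦ ∫ t in Ioi T, w i t * ψ t := by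
  obtain ⟨B, hBc, hB⟩ := hw.exists_le
  refine isLittleO_iff.2 fun c hc ↦ ?_
  obtain ⟨S, hS⟩ := eventually_atTop.1 (isLittleO_iff.1 hφψ (half_pos hc))
  have hφS (t : ℝ) (ht : T ≤ t) (htS : S < t) : |φ t| ≤ c / 2 * ψ t := by
    simpa [abs_of_nonneg (hψ t ht)] using hS t htS.le
  filter_upwards [eventually_integrableOn_of_tendsto_integral hdiv,
    hdiv.eventually_ge_atTop ((∫ t in Ioc T S, M * (B t * ψ t)) / (c / 2)),
    hdiv.eventually_ge_atTop 0] with i hint hK hI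
  have hbound := norm_integral_mul_le (half_pos hc).le (fun t ↦ (hw.pos i t).le) (hB i) hBc
    hφ hφS hψ hψc hint
  rw [div_le_iff₀ (half_pos hc)] at hK
  rw [Real.norm_of_nonneg hI]
  linarith

theorem tendsto_integral_div_integral_of_le (hw : IsNearlyExponential z l w) {S : ℝ} (hST : S ≤ T)
    (hψ : ∀ t ≥ S, 0 ≤ ψ t) (hψc : ContinuousOn ψ (Ici S))
    (hdiv : Tendsto (fun i ↦ ∫ t in Ioi T, w i t * ψ t) l atTop) :
    Tendsto (fun i ↦ (∫ t in Ioi S, w i t * ψ t) / ∫ t in Ioi T, w i t * ψ t) l (𝓝 1) := by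
  obtain ⟨B, hBc, hB⟩ := hw.exists_le
  have hIoc (g : ℝ → ℝ) (hg : Continuous g) : IntegrableOn (fun t ↦ g t * ψ t) (Ioc S T) :=
    ((hg.continuousOn.mul (hψc.mono Icc_subset_Ici_self)).integrableOn_Icc).mono_set
      Ioc_subset_Icc_self
  have hnn (i : ι) : 0 ≤ ∫ t in Ioc S T, w i t * ψ t :=
    setIntegral_nonneg measurableSet_Ioc fun t ht ↦ mul_nonneg (hw.pos i t).le (hψ t ht.1.le)
  have hle (i : ι) : ∫ t in Ioc S T, w i t * ψ t ≤ ∫ t in Ioc S T, B t * ψ t :=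
    setIntegral_mono_on (hIoc _ (hw.continuous i)) (hIoc B hBc) measurableSet_Ioc fun t ht ↦
      mul_le_mul_of_nonneg_right (hB i t) (hψ t ht.1.le)
  have hsplit : ∀ᶠ i in l, (∫ t in Ioi S, w i t * ψ t) - 1 * (∫ t in Ioi T, w i t * ψ t) =
      ∫ t in Ioc S T, w i t * ψ t := by
    filter_upwards [eventually_integrableOn_of_tendsto_integral hdiv] with i hint
    rw [← Ioc_union_Ioi_eq_Ioi hST, setIntegral_union Ioc_disjoint_Ioi_same measurableSet_Ioi
      (hIoc _ (hw.continuous i)) hint, one_mul, add_sub_cancel_right]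
  refine tendsto_div_of_isLittleO_sub (IsLittleO.congr' ?_ (hsplit.mono fun i hi ↦ hi.symm) .rfl)
    (hdiv.eventually_ne_atTop 0)
  refine IsBigO.trans_isLittleO (IsBigO.of_bound (∫ t in Ioc S T, B t * ψ t) ?_)
    (isLittleO_one_left_iff ℝ |>.2 (tendsto_norm_atTop_atTop.comp hdiv))
  exact .of_forall fun i ↦ by simpa [abs_of_nonneg (hnn i)] using hle i

theorem eventually_abs_shift_sub_le (hw : IsNearlyExponential z l w) {δ ε : ℝ} (hδ : 0 ≤ δ)
    (hε : 0 < ε) :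
    ∀ᶠ i in l, ∀ t, |w i (t + δ) - Real.exp (-z * δ) * w i t| ≤ ε * w i t := by
  have hcont : Tendsto (fun r : ℝ ↦ Real.exp (-(z + r) * δ)) (𝓝 0) (𝓝 (Real.exp (-z * δ))) := by
    have : Continuous fun r : ℝ ↦ Real.exp (-(z + r) * δ) := by fun_prop
    simpa using this.tendsto 0
  obtain ⟨r, hr, hexp⟩ := Metric.eventually_nhds_iff.1 (hcont (Metric.closedBall_mem_nhds _ hε))
  have hlower := hexp (y := r / 2) (by simpa [abs_of_pos hr] using hr)
  have hupper := hexp (y := -(r / 2)) (by simpa [abs_of_pos hr] using hr)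
  simp only [Metric.mem_closedBall, Real.dist_eq, abs_le] at hlower hupper
  filter_upwards [hw.abs_deriv_add_le (r / 2) (half_pos hr)] with i hi t
  have hge := exp_neg_mul_le_of_deriv_add_mul_nonneg (c := z + r / 2)
    (fun s _ ↦ hw.differentiable i s) (fun s _ ↦ by linarith [(abs_le.1 (hi s)).1])
    (le_add_of_nonneg_right hδ : t ≤ t + δ)
  have hle := le_exp_neg_mul_of_deriv_add_mul_nonpos (c := z + -(r / 2))
    (fun s _ ↦ hw.differentiable i s) (fun s _ ↦ by linarith [(abs_le.1 (hi s)).2])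
    (le_add_of_nonneg_right hδ : t ≤ t + δ)
  rw [add_sub_cancel_left] at hge hle
  have hpos := hw.pos i t
  refine abs_le.2 ⟨?_, ?_⟩ <;> nlinarith

theorem tendsto_integral_shift_div_integral (hw : IsNearlyExponential z l w) {δ : ℝ}
    (hδ : 0 ≤ δ) (hψ : ∀ t ≥ T, 0 ≤ ψ t) (hψc : ContinuousOn ψ (Ici T))
    (hdiv : Tendsto (fun i ↦ ∫ t in Ioi T, w i t * ψ t) l atTop) :
    Tendsto (fun i ↦ (∫ t in Ioi T, w i (t + δ) * ψ t) / ∫ t in Ioi T, w i t * ψ t) l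
      (𝓝 (Real.exp (-z * δ))) := by
  refine tendsto_div_of_isLittleO_sub (isLittleO_iff.2 fun ε hε ↦ ?_)
    (hdiv.eventually_ne_atTop 0)
  filter_upwards [hw.eventually_abs_shift_sub_le hδ hε,
    eventually_integrableOn_of_tendsto_integral hdiv, hdiv.eventually_ge_atTop 0] with i hi hint hI
  have hbound (t : ℝ) (ht : T < t) :
      ‖w i (t + δ) * ψ t - Real.exp (-z * δ) * (w i t * ψ t)‖ ≤ ε * (w i t * ψ t) := by
    rw [← mul_assoc, ← sub_mul, norm_mul, Real.norm_of_nonneg (hψ t ht.le), ← mul_assoc]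
    exact mul_le_mul_of_nonneg_right (hi t) (hψ t ht.le)
  have hwc := hw.continuous i
  have hmeas : AEStronglyMeasurable (fun t ↦ w i (t + δ) * ψ t) (volume.restrict (Ioi T)) :=
    ContinuousOn.aestronglyMeasurable
      (ContinuousOn.mul (by fun_prop) (hψc.mono Ioi_subset_Ici_self)) measurableSet_Ioi
  have hdiff : IntegrableOn
      (fun t ↦ w i (t + δ) * ψ t - Real.exp (-z * δ) * (w i t * ψ t)) (Ioi T) := by
    refine Integrable.mono' (hint.const_mul ε) (hmeas.sub (hint.1.const_mul _)) ?_
    filter_upwards [ae_restrict_mem measurableSet_Ioi] with t ht using hbound t ht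
  have hshift : IntegrableOn (fun t ↦ w i (t + δ) * ψ t) (Ioi T) := by
    simpa [Pi.add_def] using hdiff.add (hint.const_mul (Real.exp (-z * δ)))
  rw [← integral_const_mul, ← integral_sub hshift (hint.const_mul _), Real.norm_of_nonneg hI,
    ← integral_const_mul]
  refine norm_integral_le_of_norm_le (hint.const_mul ε) ?_
  filter_upwards [ae_restrict_mem measurableSet_Ioi] with t ht using hbound t ht

theorem tendsto_integral_delayed_div_integral (hw : IsNearlyExponential z l w) {δ : ℝ}
    (hδ : 0 ≤ δ) (hψ : ∀ t ≥ T - δ, 0 ≤ ψ t) (hψc : ContinuousOn ψ (Ici (T - δ)))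
    (hdiv : Tendsto (fun i ↦ ∫ t in Ioi T, w i t * ψ t) l atTop) :
    Tendsto (fun i ↦ (∫ t in Ioi T, w i t * ψ (t - δ)) / ∫ t in Ioi T, w i t * ψ t) l
      (𝓝 (Real.exp (-z * δ))) := by
  have hratio := hw.tendsto_integral_div_integral_of_le (sub_le_self T hδ) hψ hψc hdiv
  have hdiv' : Tendsto (fun i ↦ ∫ t in Ioi (T - δ), w i t * ψ t) l atTop :=
    (hratio.pos_mul_atTop one_pos hdiv).congr' <|
      (hdiv.eventually_ne_atTop 0).mono fun i hi ↦ div_mul_cancel₀ _ hi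
  have hprod := (hw.tendsto_integral_shift_div_integral hδ hψ hψc hdiv').mul hratio
  rw [mul_one] at hprod
  refine hprod.congr' ?_
  filter_upwards [hdiv'.eventually_ne_atTop 0] with i hi
  rw [div_mul_div_cancel₀ hi, ← integral_Ioi_comp_sub_right (fun t ↦ w i (t + δ) * ψ t)]
  simp only [sub_add_cancel]

end IsNearlyExponential

end NearlyExponentialWeights

section AveragedRatios

variable {ι : Type*} {l : Filter ι} {w : ι → ℝ → ℝ} {z T lam C δ : ℝ} {u v : ℝ → ℝ}

namespace IsDrivenFrom

theorem tendsto_integral_delayed_driver (h : IsDrivenFrom T lam C δ u v)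
    (hw : IsNearlyExponential z l w) (hv : Tendsto (fun i ↦ ∫ t in Ioi T, w i t * v t) l atTop) :
    Tendsto (fun i ↦ ∫ t in Ioi T, w i t * v (t - δ)) l atTop := by
  have hratio := hw.tendsto_integral_delayed_div_integral h.delay_nonneg
    (fun t ht ↦ (h.driver_pos t ht).le) h.driver_continuousOn hv
  exact (hratio.pos_mul_atTop (Real.exp_pos _) hv).congr' <|
    (hv.eventually_ne_atTop 0).mono fun i hi ↦ div_mul_cancel₀ _ hi

theorem tendsto_integral_forcing_div_delayed_driver (h : IsDrivenFrom T lam C δ u v)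
    (hw : IsNearlyExponential z l w) (hv : Tendsto (fun i ↦ ∫ t in Ioi T, w i t * v t) l atTop) :
    Tendsto (fun i ↦ (∫ t in Ioi T, w i t * (deriv u t + lam * u t)) /
      ∫ t in Ioi T, w i t * v (t - δ)) l (𝓝 C) := by
  have hdelayed := h.tendsto_integral_delayed_driver hw hv
  refine tendsto_div_of_isLittleO_sub (IsLittleO.congr' (hw.isLittleO_integral h.isLittleO
    h.abs_sub_le (fun t ht ↦ (h.delayed_driver_pos ht).le) h.continuousOn_delayed_driver hdelayed)
    ?_ .rfl) (hdelayed.eventually_ne_atTop 0)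
  filter_upwards [eventually_integrableOn_of_tendsto_integral hdelayed] with i hint
  rw [← integral_const_mul, ← integral_sub (h.integrableOn_mul_forcing (hw.continuous i)
    (fun t ↦ (hw.pos i t).le) hint) (hint.const_mul C)]
  exact integral_congr_ae (ae_of_all _ fun t ↦ by ring)

theorem abs_integral_forcing_sub_le (h : IsDrivenFrom T lam C δ u v) {w : ℝ → ℝ} {ε : ℝ}
    (hw : Differentiable ℝ w) (hw0 : ∀ t, 0 ≤ w t) (hε : ∀ t, |deriv w t + z * w t| ≤ ε * w t)
    (hwv : IntegrableOn (fun t ↦ w t * v (t - δ)) (Ioi T))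
    (hwu : IntegrableOn (fun t ↦ w t * u t) (Ioi T)) :
    |(∫ t in Ioi T, w t * (deriv u t + lam * u t)) - (z + lam) * ∫ t in Ioi T, w t * u t| ≤
      ε * (∫ t in Ioi T, w t * u t) + w T * u T := by
  have hae : ∀ᵐ t ∂volume.restrict (Ioi T),
      ‖(deriv w t + z * w t) * u t‖ ≤ ε * (w t * u t) := by
    filter_upwards [ae_restrict_mem measurableSet_Ioi] with t ht
    have hut := (h.pos t (le_of_lt ht)).le
    rw [norm_mul, Real.norm_of_nonneg hut, ← mul_assoc]
    exact mul_le_mul_of_nonneg_right (hε t) hut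
  have herr : IntegrableOn (fun t ↦ (deriv w t + z * w t) * u t) (Ioi T) := by
    refine Integrable.mono' (hwu.const_mul ε) (.mul ?_ ?_) hae
    · exact (measurable_deriv w).aestronglyMeasurable.add
        (hw.continuous.aestronglyMeasurable.const_mul z)
    · exact (h.continuousOn.mono Ioi_subset_Ici_self).aestronglyMeasurable measurableSet_Ioi
  have hdecomp (t : ℝ) : deriv w t * u t =
      (deriv w t + z * w t) * u t - z * (w t * u t) := by ring
  have hparts := h.integral_mul_forcing hw hw0 hwv hwu <| by
    simpa only [hdecomp] using! herr.sub (hwu.const_mul z)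
  simp only [hdecomp] at hparts
  rw [integral_sub herr (hwu.const_mul z), integral_const_mul] at hparts
  have hsmall := norm_integral_le_of_norm_le (hwu.const_mul ε) hae
  rw [integral_const_mul, Real.norm_eq_abs, abs_le] at hsmall
  have hboundary := mul_nonneg (hw0 T) (h.pos T le_rfl).le
  rw [hparts]
  refine abs_le.2 ⟨?_, ?_⟩ <;> linarith

theorem tendsto_integral_forcing_div_integral (h : IsDrivenFrom T lam C δ u v)
    (hw : IsNearlyExponential z l w) (hv : Tendsto (fun i ↦ ∫ t in Ioi T, w i t * v t) l atTop)
    (hu : Tendsto (fun i ↦ ∫ t in Ioi T, w i t * u t) l atTop) :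
    Tendsto (fun i ↦ (∫ t in Ioi T, w i t * (deriv u t + lam * u t)) /
      ∫ t in Ioi T, w i t * u t) l (𝓝 (z + lam)) := by
  obtain ⟨B, -, hB⟩ := hw.exists_le
  refine tendsto_div_of_isLittleO_sub (isLittleO_iff.2 fun ε hε ↦ ?_) (hu.eventually_ne_atTop 0)
  filter_upwards [hw.abs_deriv_add_le (ε / 2) (half_pos hε),
    eventually_integrableOn_of_tendsto_integral (h.tendsto_integral_delayed_driver hw hv),
    eventually_integrableOn_of_tendsto_integral hu, hu.eventually_ge_atTop 0,
    hu.eventually_ge_atTop (B T * u T / (ε / 2))] with i hi hwv hwu hI hboundary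
  have herr := h.abs_integral_forcing_sub_le (hw.differentiable i) (fun t ↦ (hw.pos i t).le)
    hi hwv hwu
  have hwB : w i T * u T ≤ B T * u T := mul_le_mul_of_nonneg_right (hB i T) (h.pos T le_rfl).le
  rw [div_le_iff₀ (half_pos hε)] at hboundary
  rw [Real.norm_of_nonneg hI, Real.norm_eq_abs]
  linarith

theorem tendsto_integral_driver_div_integral (h : IsDrivenFrom T lam C δ u v)
    (hw : IsNearlyExponential z l w) (hv : Tendsto (fun i ↦ ∫ t in Ioi T, w i t * v t) l atTop)
    (hu : Tendsto (fun i ↦ ∫ t in Ioi T, w i t * u t) l atTop) :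
    Tendsto (fun i ↦ (∫ t in Ioi T, w i t * v t) / ∫ t in Ioi T, w i t * u t) l
      (𝓝 ((z + lam) / (C * Real.exp (-z * δ)))) := by
  have hgain := h.tendsto_integral_forcing_div_delayed_driver hw hv
  have hdelay := hw.tendsto_integral_delayed_div_integral h.delay_nonneg
    (fun t ht ↦ (h.driver_pos t ht).le) h.driver_continuousOn hv
  refine ((h.tendsto_integral_forcing_div_integral hw hv hu).div (hgain.mul hdelay)
    (mul_ne_zero h.gain_ne_zero (Real.exp_ne_zero _))).congr' ?_
  filter_upwards [hgain.eventually_ne h.gain_ne_zero, hv.eventually_ne_atTop 0] with i hi hvi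
  obtain ⟨hH, hV⟩ := div_ne_zero_iff.1 hi
  simp only [Pi.div_apply]
  field_simp

end IsDrivenFrom

theorem prod_add_eq_of_tendsto_integral {n : ℕ} [NeZero n] [l.NeBot] {lam C δ : Fin n → ℝ}
    {y : Fin n → ℝ → ℝ} (h : ∀ j, IsDrivenFrom T (lam j) (C j) (δ j) (y j) (y (j + 1)))
    (hw : IsNearlyExponential z l w)
    (hdiv : ∀ j, Tendsto (fun i ↦ ∫ t in Ioi T, w i t * y j t) l atTop) :
    ∏ j, (z + lam j) = (∏ j, C j) * Real.exp (-z * ∑ j, δ j) := by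
  have hlim := tendsto_finsetProd Finset.univ fun j _ ↦
    (h j).tendsto_integral_driver_div_integral hw (hdiv (j + 1)) (hdiv j)
  have hone : ∀ᶠ i in l, ∏ j, (∫ t in Ioi T, w i t * y (j + 1) t) / ∫ t in Ioi T, w i t * y j t =
      1 := by
    filter_upwards [eventually_all.2 fun j ↦ (hdiv j).eventually_ne_atTop 0] with i hi
    rw [Finset.prod_div_distrib, prod_add_one fun j ↦ ∫ t in Ioi T, w i t * y j t,
      div_self (Finset.prod_ne_zero_iff.2 fun j _ ↦ hi j)]
  have hprod := tendsto_nhds_unique (hlim.congr' hone) tendsto_const_nhds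
  rw [Finset.prod_div_distrib, div_eq_one_iff_eq, Finset.prod_mul_distrib, ← Real.exp_sum,
    ← Finset.mul_sum] at hprod
  · exact hprod
  · exact Finset.prod_ne_zero_iff.2 fun j _ ↦
      mul_ne_zero (h j).gain_ne_zero (Real.exp_ne_zero _)

end AveragedRatios

section ExponentialWeights

/-- The quotient `e^{-zt} / (e^{-ρt} + η e^{ρt})`: for small `η > 0` it follows `e^{-(z-ρ)t}` until
time `-log η / (2ρ)` and decays like `e^{-(z+ρ)t}` afterwards. Hence its integral against a function
of abscissa `z` converges for every `η > 0` and diverges as `η → 0`. -/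
noncomputable def exponentialWeight (z ρ η t : ℝ) : ℝ :=
  Real.exp (-z * t) / (Real.exp (-ρ * t) + η * Real.exp (ρ * t))

namespace exponentialWeight

variable {z ρ η : ℝ}

theorem denom_pos (hη : 0 ≤ η) (t : ℝ) : 0 < Real.exp (-ρ * t) + η * Real.exp (ρ * t) := by
  positivity

theorem pos (hη : 0 ≤ η) (t : ℝ) : 0 < exponentialWeight z ρ η t :=
  div_pos (Real.exp_pos _) (denom_pos hη t)

theorem differentiable (hη : 0 ≤ η) : Differentiable ℝ (exponentialWeight z ρ η) :=
  Differentiable.div (by fun_prop) (by fun_prop) fun t ↦ (denom_pos hη t).ne'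

theorem deriv_add_mul (hη : 0 ≤ η) (t : ℝ) :
    deriv (exponentialWeight z ρ η) t + z * exponentialWeight z ρ η t =
      ρ * exponentialWeight z ρ η t * ((Real.exp (-ρ * t) - η * Real.exp (ρ * t)) /
        (Real.exp (-ρ * t) + η * Real.exp (ρ * t))) := by
  have hden := (denom_pos (ρ := ρ) hη t).ne'
  have hderiv : deriv (exponentialWeight z ρ η) t = _ :=
    ((hasDerivAt_exp_const_mul (-z) t).div ((hasDerivAt_exp_const_mul (-ρ) t).add
      ((hasDerivAt_exp_const_mul ρ t).const_mul η)) hden).deriv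
  rw [hderiv, exponentialWeight, Pi.add_apply]
  field_simp
  ring

theorem abs_deriv_add_mul_le (hρ : 0 ≤ ρ) (hη : 0 ≤ η) (t : ℝ) :
    |deriv (exponentialWeight z ρ η) t + z * exponentialWeight z ρ η t| ≤
      ρ * exponentialWeight z ρ η t := by
  have hnn := mul_nonneg hρ (pos (z := z) (ρ := ρ) hη t).le
  rw [deriv_add_mul hη, abs_mul, abs_of_nonneg hnn]
  refine mul_le_of_le_one_right hnn ?_
  rw [abs_div, abs_of_pos (denom_pos hη t), div_le_one (denom_pos hη t)]
  have := Real.exp_pos (-ρ * t)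
  have := mul_nonneg hη (Real.exp_nonneg (ρ * t))
  exact abs_le.2 ⟨by linarith, by linarith⟩

theorem le_exp_add_abs (hρ : ρ ∈ Icc 0 1) (hη : 0 ≤ η) (t : ℝ) :
    exponentialWeight z ρ η t ≤ Real.exp (-z * t + |t|) := by
  rw [exponentialWeight, div_le_iff₀ (denom_pos hη t)]
  have hle : -z * t ≤ -z * t + |t| + -ρ * t := by
    have := (le_abs_self (ρ * t)).trans_eq (abs_mul ρ t)
    rw [abs_of_nonneg hρ.1] at this
    nlinarith [mul_le_mul_of_nonneg_right hρ.2 (abs_nonneg t)]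
  calc Real.exp (-z * t) ≤ Real.exp (-z * t + |t|) * Real.exp (-ρ * t) := by
        rw [← Real.exp_add]
        exact Real.exp_le_exp.2 hle
    _ ≤ _ := mul_le_mul_of_nonneg_left
        (le_add_of_nonneg_right (by positivity)) (Real.exp_nonneg _)

theorem le_inv_mul_exp (hη : 0 < η) (t : ℝ) :
    exponentialWeight z ρ η t ≤ η⁻¹ * Real.exp (-(z + ρ) * t) := by
  rw [exponentialWeight, div_le_iff₀ (denom_pos hη.le t)]
  calc Real.exp (-z * t) = η⁻¹ * Real.exp (-(z + ρ) * t) * (η * Real.exp (ρ * t)) := by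
        rw [mul_mul_mul_comm, inv_mul_cancel₀ hη.ne', one_mul, ← Real.exp_add]
        ring_nf
    _ ≤ _ := by
        gcongr
        exact le_add_of_nonneg_left (Real.exp_nonneg _)

theorem half_exp_le {t : ℝ} (hη : 0 ≤ η) (hηt : η ≤ Real.exp (-2 * ρ * t)) :
    Real.exp (-(z - ρ) * t) / 2 ≤ exponentialWeight z ρ η t := by
  have hden : η * Real.exp (ρ * t) ≤ Real.exp (-ρ * t) :=
    (mul_le_mul_of_nonneg_right hηt (Real.exp_nonneg _)).trans_eq <| by
      rw [← Real.exp_add]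
      ring_nf
  calc Real.exp (-(z - ρ) * t) / 2 = Real.exp (-z * t) / (2 * Real.exp (-ρ * t)) := by
        rw [← div_div, div_right_comm, ← Real.exp_sub]
        ring_nf
    _ ≤ exponentialWeight z ρ η t :=
        div_le_div_of_nonneg_left (Real.exp_nonneg _) (denom_pos hη t) (by linarith)

theorem integrableOn_mul {T : ℝ} {u : ℝ → ℝ} (hη : 0 < η) (hu : ContinuousOn u (Ici T))
    (hconv : LaplaceConverges u (z + ρ)) :
    IntegrableOn (fun t ↦ exponentialWeight z ρ η t * u t) (Ioi T) := by
  have hint : IntegrableOn (fun t ↦ Real.exp (-(z + ρ) * t) * u t) (Ioi T) :=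
    integrableOn_Ioi_of_integrableAtFilter (ContinuousOn.mul (by fun_prop) hu) hconv
  have hc := (differentiable (z := z) (ρ := ρ) hη.le).continuous
  refine Integrable.mono (hint.const_mul η⁻¹) (ContinuousOn.aestronglyMeasurable
    (hc.continuousOn.mul (hu.mono Ioi_subset_Ici_self)) measurableSet_Ioi) (ae_of_all _ fun t ↦ ?_)
  rw [← mul_assoc, norm_mul, norm_mul, Real.norm_of_nonneg (pos hη.le t).le]
  exact mul_le_mul_of_nonneg_right ((le_inv_mul_exp hη t).trans (le_abs_self _)) (norm_nonneg _)

end exponentialWeight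

theorem exists_lt_intervalIntegral_of_not_laplaceConverges {u : ℝ → ℝ} {s T : ℝ}
    (hu : ∀ t ≥ T, 0 ≤ u t) (huc : ContinuousOn u (Ici T)) (hdiv : ¬ LaplaceConverges u s) (K : ℝ) :
    ∃ S ≥ T, K < ∫ t in T..S, Real.exp (-s * t) * u t := by
  by_contra! hK
  have hc : ContinuousOn (fun t ↦ Real.exp (-s * t) * u t) (Ici T) :=
    ContinuousOn.mul (by fun_prop) huc
  refine hdiv ⟨Ioi T, Ioi_mem_atTop T, integrableOn_Ioi_of_intervalIntegral_norm_bounded K T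
    (fun S ↦ (hc.mono Icc_subset_Ici_self).integrableOn_Icc.mono_set Ioc_subset_Icc_self)
    tendsto_id ?_⟩
  filter_upwards [eventually_ge_atTop T] with S hS
  rw [id_eq]
  refine (intervalIntegral.integral_congr fun t ht ↦ ?_).trans_le (hK S hS)
  rw [uIcc_of_le hS] at ht
  exact Real.norm_of_nonneg (mul_nonneg (Real.exp_nonneg _) (hu t ht.1))

theorem tendsto_integral_exponentialWeight_mul {u : ℝ → ℝ} {z ρ T : ℝ} (hρ : 0 ≤ ρ)
    (hu : ∀ t ≥ T, 0 ≤ u t) (huc : ContinuousOn u (Ici T)) (hconv : LaplaceConverges u (z + ρ))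
    (hdiv : ¬ LaplaceConverges u (z - ρ)) :
    Tendsto (fun η ↦ ∫ t in Ioi T, exponentialWeight z ρ η t * u t) (𝓝[>] 0) atTop := by
  refine tendsto_atTop.2 fun K ↦ ?_
  obtain ⟨S, hS, hKS⟩ := exists_lt_intervalIntegral_of_not_laplaceConverges hu huc hdiv (2 * K)
  have hsmall : ∀ᶠ η : ℝ in 𝓝[>] 0, η < Real.exp (-2 * ρ * S) :=
    nhdsWithin_le_nhds (eventually_lt_nhds (Real.exp_pos _))
  filter_upwards [hsmall, self_mem_nhdsWithin] with η hηS hη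
  have hint := exponentialWeight.integrableOn_mul (mem_Ioi.1 hη) huc hconv
  have hlow : IntegrableOn (fun t ↦ Real.exp (-(z - ρ) * t) * u t) (Ioc T S) :=
    (ContinuousOn.integrableOn_Icc (ContinuousOn.mul (by fun_prop)
      (huc.mono Icc_subset_Ici_self))).mono_set Ioc_subset_Icc_self
  rw [intervalIntegral.integral_of_le hS] at hKS
  calc K ≤ ∫ t in Ioc T S, 2⁻¹ * (Real.exp (-(z - ρ) * t) * u t) := by
        rw [integral_const_mul]
        linarith
    _ ≤ ∫ t in Ioc T S, exponentialWeight z ρ η t * u t := by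
        refine setIntegral_mono_on (hlow.const_mul _) (hint.mono_set Ioc_subset_Ioi_self)
          measurableSet_Ioc fun t ht ↦ ?_
        rw [← mul_assoc, inv_mul_eq_div]
        refine mul_le_mul_of_nonneg_right (exponentialWeight.half_exp_le (mem_Ioi.1 hη).le
          (hηS.le.trans (Real.exp_le_exp.2 ?_))) (hu t ht.1.le)
        nlinarith [ht.2]
    _ ≤ ∫ t in Ioi T, exponentialWeight z ρ η t * u t := by
        refine setIntegral_mono_set hint ?_ Ioc_subset_Ioi_self.eventuallyLE
        filter_upwards [ae_restrict_mem measurableSet_Ioi] with t ht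
        exact mul_nonneg (exponentialWeight.pos (mem_Ioi.1 hη).le t).le (hu t (le_of_lt ht))

theorem exists_isNearlyExponential {κ : Type*} [Finite κ] {y : κ → ℝ → ℝ} {z T : ℝ}
    (hy : ∀ j, ∀ t ≥ T, 0 ≤ y j t) (hyc : ∀ j, ContinuousOn (y j) (Ici T))
    (hconv : ∀ j, ∀ s > z, LaplaceConverges (y j) s)
    (hdiv : ∀ j, ∀ s < z, ¬ LaplaceConverges (y j) s) :
    ∃ w : ℕ → ℝ → ℝ, IsNearlyExponential z atTop w ∧
      ∀ j, Tendsto (fun k ↦ ∫ t in Ioi T, w k t * y j t) atTop atTop := by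
  have hchoose (k : ℕ) : ∃ η > 0, ∀ j,
      (k : ℝ) ≤ ∫ t in Ioi T, exponentialWeight z (1 / ((k : ℝ) + 1)) η t * y j t := by
    have hρ : 0 < 1 / ((k : ℝ) + 1) := Nat.one_div_pos_of_nat
    obtain ⟨η, hη, hηk⟩ := (eventually_all.2 fun j ↦ (tendsto_integral_exponentialWeight_mul hρ.le
      (hy j) (hyc j) (hconv j _ (lt_add_of_pos_right z hρ))
      (hdiv j _ (sub_lt_self z hρ))).eventually_ge_atTop
        (k : ℝ)).and self_mem_nhdsWithin |>.exists
    exact ⟨η, hηk, hη⟩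
  choose η hη hηk using hchoose
  refine ⟨fun k ↦ exponentialWeight z (1 / ((k : ℝ) + 1)) (η k),
    ⟨fun k ↦ exponentialWeight.pos (hη k).le, fun k ↦ exponentialWeight.differentiable (hη k).le,
      fun ε hε ↦ ?_, fun t ↦ Real.exp (-z * t + |t|), by fun_prop, fun k ↦ ?_⟩,
    fun j ↦ tendsto_atTop_mono (fun k ↦ hηk k j) tendsto_natCast_atTop_atTop⟩
  · filter_upwards [tendsto_one_div_add_atTop_nhds_zero_nat.eventually_lt_const hε] with k hk t
    exact (exponentialWeight.abs_deriv_add_mul_le Nat.one_div_pos_of_nat.le (hη k).le t).trans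
      (mul_le_mul_of_nonneg_right hk.le (exponentialWeight.pos (hη k).le t).le)
  · refine exponentialWeight.le_exp_add_abs ⟨Nat.one_div_pos_of_nat.le, ?_⟩ (hη k).le
    exact div_le_one_of_le₀ (by linarith [Nat.cast_nonneg (α := ℝ) k]) (by positivity)

end ExponentialWeights

theorem exists_prod_add_eq_of_isDrivenFrom {n : ℕ} [NeZero n] {T s : ℝ} {lam C δ : Fin n → ℝ}
    {y : Fin n → ℝ → ℝ} {i : Fin n}
    (h : ∀ j, IsDrivenFrom T (lam j) (C j) (δ j) (y j) (y (j + 1))) (hδ : 0 < ∑ j, δ j)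
    (hi : LaplaceConverges (y i) s) :
    ∃ z, ∏ j, (z + lam j) = (∏ j, C j) * Real.exp (-z * ∑ j, δ j) := by
  have hall {j : Fin n} {r : ℝ} (hj : LaplaceConverges (y j) r) (k : Fin n) :
      LaplaceConverges (y k) r :=
    forall_of_forall_add_one (P := fun k ↦ LaplaceConverges (y k) r)
      (fun k hk ↦ (h k).laplaceConverges_driver hk) hj k
  obtain ⟨r, j, hj⟩ := exists_not_laplaceConverges h hδ
  obtain ⟨z, hdiv, hconv⟩ := exists_abscissa hj (hall hi j)
  obtain ⟨w, hw, hlim⟩ := exists_isNearlyExponential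
    (fun k t ht ↦ ((h k).pos t ht).le) (fun k ↦ (h k).continuousOn)
    (fun k s hs ↦ hall (hconv s hs) k) (fun k s hs hk ↦ hdiv s hs (hall hk j))
  exact ⟨z, prod_add_eq_of_tendsto_integral h hw hlim⟩

section AsymptoticsOfScalarEquations

variable {u : ℝ → ℝ} {lam : ℝ}

theorem eventually_lt_of_deriv_add_mul_le {m M : ℝ} (hlam : 0 < lam)
    (hd : ∀ᶠ t in atTop, DifferentiableAt ℝ u t)
    (h : ∀ᶠ t in atTop, deriv u t + lam * u t ≤ lam * m) (hmM : m < M) :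
    ∀ᶠ t in atTop, u t < M := by
  obtain ⟨T, hT⟩ := eventually_atTop.1 (hd.and h)
  have hdecay : Tendsto (fun t ↦ Real.exp (-lam * (t - T)) * (u T - m)) atTop (𝓝 0) := by
    have harg : Tendsto (fun t ↦ -lam * (t - T)) atTop atBot :=
      (tendsto_atTop_add_const_right _ (-T) tendsto_id).const_mul_atTop_of_neg (neg_neg_of_pos hlam)
    simpa using (Real.tendsto_exp_atBot.comp harg).mul_const (u T - m)
  filter_upwards [hdecay.eventually_lt_const (sub_pos.2 hmM), eventually_ge_atTop T] with t ht hTt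
  have hle := le_exp_neg_mul_of_deriv_add_mul_nonpos (u := fun t ↦ u t - m) (c := lam)
    (fun t ht ↦ (hT t ht).1.sub_const m)
    (fun t ht ↦ by rw [deriv_sub_const]; linarith [(hT t ht).2]) hTt
  linarith

theorem tendsto_zero_of_tendsto_deriv_add_mul (hlam : 0 < lam)
    (hd : ∀ᶠ t in atTop, DifferentiableAt ℝ u t)
    (h : Tendsto (fun t ↦ deriv u t + lam * u t) atTop (𝓝 0)) : Tendsto u atTop (𝓝 0) := by
  refine tendsto_order.2 ⟨fun a ha ↦ ?_, fun a ha ↦ ?_⟩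
  · have hneg : ∀ᶠ t in atTop, deriv (-u) t + lam * (-u) t ≤ lam * (-a / 2) := by
      filter_upwards [h.eventually_const_lt (by nlinarith : lam * (a / 2) < 0)] with t ht
      rw [deriv.neg, Pi.neg_apply]
      linarith
    filter_upwards [eventually_lt_of_deriv_add_mul_le hlam (hd.mono fun t ht ↦ ht.neg) hneg
      (by linarith : -a / 2 < -a)] with t ht
    exact neg_lt_neg_iff.1 ht
  · exact eventually_lt_of_deriv_add_mul_le hlam hd
      (h.eventually_le_const (by positivity : 0 < lam * (a / 2))) (half_lt_self ha)

theorem tendsto_zero_of_deriv_add_mul_nonpos (hlam : 0 < lam)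
    (hd : ∀ᶠ t in atTop, DifferentiableAt ℝ u t) (hu : ∀ᶠ t in atTop, 0 < u t)
    (h : ∀ᶠ t in atTop, deriv u t + lam * u t ≤ 0) : Tendsto u atTop (𝓝 0) :=
  tendsto_order.2 ⟨fun _ ha ↦ hu.mono fun _ ht ↦ ha.trans ht, fun _ ha ↦
    eventually_lt_of_deriv_add_mul_le hlam hd (by simpa using h) ha⟩

theorem exists_eventually_mul_pos_of_ne_zero (hc : ∀ᶠ t in atTop, ContinuousAt u t)
    (hu : ∀ᶠ t in atTop, u t ≠ 0) : ∃ σ ≠ 0, ∀ᶠ t in atTop, 0 < σ * u t := by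
  obtain ⟨T, hT⟩ := eventually_atTop.1 (hc.and hu)
  refine ⟨u T, (hT T le_rfl).2, eventually_atTop.2 ⟨T, fun t ht ↦ ?_⟩⟩
  by_contra! hle
  obtain ⟨r, hr, hr0⟩ : ∃ r ∈ Ici T, u r = 0 := by
    have hivt := isPreconnected_Ici.intermediate_value₂ (f := fun r ↦ u T * u r) (g := 0)
      ht self_mem_Ici
      (fun r hr ↦ ((hT r hr).1.const_mul _).continuousWithinAt) continuousOn_const hle
      (mul_self_nonneg _)
    simpa [(hT T le_rfl).2] using hivt
  exact (hT r hr).2 hr0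

/- `e^{ct} u(t)` is eventually strictly monotone, hence changes sign at most once. -/
theorem exists_eventually_mul_pos_of_deriv_add_mul {c σ : ℝ}
    (hd : ∀ᶠ t in atTop, DifferentiableAt ℝ u t)
    (h : ∀ᶠ t in atTop, 0 < σ * (deriv u t + c * u t)) :
    ∃ σ ≠ 0, ∀ᶠ t in atTop, 0 < σ * u t := by
  obtain ⟨T, hT⟩ := eventually_atTop.1 (hd.and h)
  refine exists_eventually_mul_pos_of_ne_zero (hd.mono fun t ht ↦ ht.continuousAt) ?_
  have hmono : StrictMonoOn (fun t ↦ σ * (Real.exp (c * t) * u t)) (Ici T) := by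
    have hder (t : ℝ) (ht : T ≤ t) := (hasDerivAt_exp_mul (c := c) (hT t ht).1).const_mul σ
    refine strictMonoOn_of_deriv_pos (convex_Ici T)
      (fun t ht ↦ (hder t ht).continuousAt.continuousWithinAt) fun t ht ↦ ?_
    rw [interior_Ici] at ht
    rw [(hder t (le_of_lt ht)).deriv, mul_left_comm]
    exact mul_pos (Real.exp_pos _) (hT t (le_of_lt ht)).2
  by_cases hzero : ∃ S ≥ T, u S = 0
  · obtain ⟨S, hS, huS⟩ := hzero
    filter_upwards [eventually_gt_atTop S] with t ht hut
    exact (hmono hS (hS.trans ht.le) ht).ne (by simp [huS, hut])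
  · push Not at hzero
    exact eventually_atTop.2 ⟨T, hzero⟩

end AsymptoticsOfScalarEquations

section SignOfFeedback

variable {F : ℝ → ℝ}

theorem eq_zero_of_continuousAt_of_mul_pos (hF : ContinuousAt F 0) (h : ∀ y ≠ 0, 0 < y * F y) :
    F 0 = 0 := by
  have hge : 0 ≤ F 0 := ge_of_tendsto (hF.mono_left (nhdsWithin_le_nhds (s := Ioi 0))) <| by
    filter_upwards [self_mem_nhdsWithin] with y (hy : 0 < y)
    exact (pos_of_mul_pos_right (h y hy.ne') hy.le).le
  have hle : F 0 ≤ 0 := le_of_tendsto (hF.mono_left (nhdsWithin_le_nhds (s := Iio 0))) <| by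
    filter_upwards [self_mem_nhdsWithin] with y (hy : y < 0)
    exact (neg_of_mul_pos_right (h y hy.ne) hy.le).le
  exact hle.antisymm hge

theorem deriv_pos_of_mul_pos (h : ∀ y ≠ 0, 0 < y * F y) (hd : deriv F 0 ≠ 0) :
    0 < deriv F 0 := by
  have hF := differentiableAt_of_deriv_ne_zero hd
  refine hd.symm.lt_of_le (ge_of_tendsto (hasDerivAt_iff_tendsto_slope.1 hF.hasDerivAt) ?_)
  filter_upwards [self_mem_nhdsWithin] with y (hy : y ≠ 0)
  rw [slope_def_field, eq_zero_of_continuousAt_of_mul_pos hF.continuousAt h, sub_zero, sub_zero]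
  exact (div_pos_iff.2 (mul_pos_iff.1 (mul_comm y _ ▸ h y hy))).le

theorem deriv_neg_of_mul_neg (h : ∀ y ≠ 0, y * F y < 0) (hd : deriv F 0 ≠ 0) :
    deriv F 0 < 0 := by
  have hpos := deriv_pos_of_mul_pos (F := -F) (fun y hy ↦ by simpa using h y hy)
    (by simpa [deriv.neg] using hd)
  simpa [deriv.neg] using hpos

end SignOfFeedback

section FeedbackPairs

theorem tendsto_sub_const_atTop (δ : ℝ) : Tendsto (fun t : ℝ ↦ t - δ) atTop atTop :=
  tendsto_atTop_add_const_right _ (-δ) tendsto_id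

/-- `u` solves the nonlinear delay equation `u'(t) + lam * u(t) = F (v(t - δ))` for large `t`, where
`d = F'(0)` and the feedback `F` has the sign of its linearization `d * y` away from `0`: positive
feedback if `0 < d`, negative feedback if `d < 0`. -/
structure IsFeedbackPair (lam d δ : ℝ) (F u v : ℝ → ℝ) : Prop where
  rate_pos : 0 < lam
  delay_nonneg : 0 ≤ δ
  hasDerivAt_zero : HasDerivAt F d 0
  feedback : ∀ y ≠ 0, 0 < d * (y * F y)
  eventually_hasDerivAt : ∀ᶠ t in atTop, HasDerivAt u (-lam * u t + F (v (t - δ))) t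

namespace IsFeedbackPair

variable {lam d δ : ℝ} {F u v : ℝ → ℝ}

theorem gain_ne_zero (h : IsFeedbackPair lam d δ F u v) : d ≠ 0 :=
  left_ne_zero_of_mul (h.feedback 1 one_ne_zero).ne'

theorem map_zero (h : IsFeedbackPair lam d δ F u v) : F 0 = 0 := by
  have hzero : d * F 0 = 0 :=
    eq_zero_of_continuousAt_of_mul_pos (h.hasDerivAt_zero.continuousAt.const_mul d)
      fun y hy ↦ (h.feedback y hy).trans_eq (mul_left_comm _ _ _)
  exact (mul_eq_zero.1 hzero).resolve_left h.gain_ne_zero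

theorem eventually_differentiableAt (h : IsFeedbackPair lam d δ F u v) :
    ∀ᶠ t in atTop, DifferentiableAt ℝ u t :=
  h.eventually_hasDerivAt.mono fun _ ht ↦ ht.differentiableAt

theorem eventually_deriv_add_mul (h : IsFeedbackPair lam d δ F u v) :
    ∀ᶠ t in atTop, deriv u t + lam * u t = F (v (t - δ)) :=
  h.eventually_hasDerivAt.mono fun t ht ↦ by rw [ht.deriv]; ring

theorem exists_eventually_mul_pos (h : IsFeedbackPair lam d δ F u v)
    (hv : ∃ σ ≠ 0, ∀ᶠ t in atTop, 0 < σ * v t) : ∃ σ ≠ 0, ∀ᶠ t in atTop, 0 < σ * u t := by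
  obtain ⟨σ, -, hσv⟩ := hv
  refine exists_eventually_mul_pos_of_deriv_add_mul (c := lam) (σ := σ * d)
    h.eventually_differentiableAt ?_
  filter_upwards [h.eventually_deriv_add_mul, (tendsto_sub_const_atTop δ).eventually hσv]
    with t ht hvt
  have hv0 : v (t - δ) ≠ 0 := right_ne_zero_of_mul hvt.ne'
  have hpos : 0 < v (t - δ) ^ 2 * (σ * d * F (v (t - δ))) := by
    linarith [mul_pos hvt (h.feedback _ hv0)]
  rw [ht]
  exact pos_of_mul_pos_right hpos (sq_nonneg _)

theorem tendsto_zero_of_driver (h : IsFeedbackPair lam d δ F u v) (hv : Tendsto v atTop (𝓝 0)) :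
    Tendsto u atTop (𝓝 0) := by
  refine tendsto_zero_of_tendsto_deriv_add_mul h.rate_pos h.eventually_differentiableAt
    (Tendsto.congr' (h.eventually_deriv_add_mul.mono fun t ht ↦ ht.symm) ?_)
  have hF := h.hasDerivAt_zero.continuousAt.tendsto.comp (hv.comp (tendsto_sub_const_atTop δ))
  rwa [h.map_zero] at hF

theorem tendsto_zero_of_gain_neg (h : IsFeedbackPair lam d δ F u v) (hd : d < 0)
    (hu : ∀ᶠ t in atTop, 0 < u t) (hv : ∀ᶠ t in atTop, 0 < v t) : Tendsto u atTop (𝓝 0) := by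
  refine tendsto_zero_of_deriv_add_mul_nonpos h.rate_pos h.eventually_differentiableAt hu ?_
  filter_upwards [h.eventually_deriv_add_mul, (tendsto_sub_const_atTop δ).eventually hv]
    with t ht hvt
  have hneg := neg_of_mul_pos_right (h.feedback _ hvt.ne') hd.le
  exact ht.trans_le (neg_of_mul_neg_right hneg hvt.le).le

theorem eventually_isDrivenFrom (h : IsFeedbackPair lam d δ F u v)
    (hu : ∀ᶠ t in atTop, 0 < u t) (hv : ∀ᶠ t in atTop, 0 < v t)
    (hvc : ∀ᶠ t in atTop, ContinuousAt v t) (hv0 : Tendsto v atTop (𝓝 0)) :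
    ∀ᶠ T in atTop, IsDrivenFrom T lam d δ u v := by
  have hv0' := hv0.comp (tendsto_sub_const_atTop δ)
  have hlin : (fun t ↦ deriv u t + lam * u t - d * v (t - δ)) =o[atTop] fun t ↦ v (t - δ) := by
    have hF := h.hasDerivAt_zero.isLittleO.comp_tendsto hv0'
    refine (hF.congr' ?_ (.of_forall fun t ↦ by simp))
    filter_upwards [h.eventually_deriv_add_mul] with t ht
    simp [ht, h.map_zero, mul_comm]
  have hsmall := isLittleO_iff.1 hlin (half_pos (abs_pos.2 h.gain_ne_zero))
  obtain ⟨S, hS⟩ := eventually_atTop.1 (hv.and hvc)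
  obtain ⟨R, hR⟩ := eventually_atTop.1
    (hu.and (h.eventually_differentiableAt.and hsmall))
  filter_upwards [eventually_ge_atTop R, eventually_ge_atTop (S + δ)] with T hRT hST
  have hSδ : S ≤ T - δ := le_sub_iff_add_le.2 hST
  refine ⟨h.gain_ne_zero, h.delay_nonneg, fun t ht ↦ (hR t (hRT.trans ht)).1,
    fun t ht ↦ (hR t (hRT.trans ht)).2.1, fun t ht ↦ (hS t (hSδ.trans ht)).1,
    fun t ht ↦ (hS t (hSδ.trans ht)).2.continuousWithinAt, hlin, fun t ht ↦ ?_⟩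
  have hvt := (hS (t - δ) (hSδ.trans (sub_le_sub_right ht δ))).1
  simpa [abs_of_pos hvt] using (hR t (hRT.trans ht)).2.2

theorem const_mul (h : IsFeedbackPair lam d δ F u v) {a b : ℝ} (ha : a ≠ 0) (hb : b ≠ 0) :
    IsFeedbackPair lam (a * d / b) δ (fun y ↦ a * F (y / b)) (fun t ↦ a * u t)
      (fun t ↦ b * v t) where
  rate_pos := h.rate_pos
  delay_nonneg := h.delay_nonneg
  hasDerivAt_zero := by
    have hF : HasDerivAt F d (0 / b) := by simpa using h.hasDerivAt_zero
    exact ((hF.comp 0 ((hasDerivAt_id 0).div_const b)).const_mul a).congr_deriv (by ring)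
  feedback y hy := by
    have := h.feedback _ (div_ne_zero hy hb)
    calc 0 < a ^ 2 * (d * (y / b * F (y / b))) := by positivity
      _ = _ := by ring
  eventually_hasDerivAt := by
    filter_upwards [h.eventually_hasDerivAt] with t ht
    rw [mul_div_cancel_left₀ _ hb]
    exact (ht.const_mul a).congr_deriv (by ring)

end IsFeedbackPair

end FeedbackPairs

section FeedbackCycles

variable {n : ℕ} [NeZero n] {lam d δ : Fin n → ℝ} {F X : Fin n → ℝ → ℝ}

theorem exists_prod_add_eq_of_eventually_pos
    (h : ∀ j, IsFeedbackPair (lam j) (d j) (δ j) (F j) (X j) (X (j + 1)))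
    (hd : ∏ j, d j < 0) (hδ : 0 < ∑ j, δ j) (hX : ∀ j, ∀ᶠ t in atTop, 0 < X j t) :
    ∃ z, ∏ j, (z + lam j) = (∏ j, d j) * Real.exp (-z * ∑ j, δ j) := by
  obtain ⟨i, hi⟩ : ∃ i, d i < 0 := by
    by_contra! hnonneg
    exact hd.not_ge (Finset.prod_nonneg fun j _ ↦ hnonneg j)
  have hX0 (j : Fin n) : Tendsto (X j) atTop (𝓝 0) :=
    forall_of_forall_of_add_one (P := fun j ↦ Tendsto (X j) atTop (𝓝 0))
      (fun j hj ↦ (h j).tendsto_zero_of_driver hj)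
      ((h i).tendsto_zero_of_gain_neg hi (hX i) (hX (i + 1))) j
  have hXc (j : Fin n) : ∀ᶠ t in atTop, ContinuousAt (X j) t :=
    (h j).eventually_differentiableAt.mono fun _ ht ↦ ht.continuousAt
  obtain ⟨T, hT⟩ := (eventually_all.2 fun j ↦ (h j).eventually_isDrivenFrom (hX j) (hX (j + 1))
    (hXc (j + 1)) (hX0 (j + 1))).exists
  exact exists_prod_add_eq_of_isDrivenFrom hT hδ <|
    LaplaceConverges.of_isBigO_one one_pos (hT i).continuousOn ((hX0 i).isBigO_one ℝ)

theorem exists_prod_add_eq_of_eventually_ne_zero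
    (h : ∀ j, IsFeedbackPair (lam j) (d j) (δ j) (F j) (X j) (X (j + 1)))
    (hd : ∏ j, d j < 0) (hδ : 0 < ∑ j, δ j) {i : Fin n} (hX : ∀ᶠ t in atTop, X i t ≠ 0) :
    ∃ z, ∏ j, (z + lam j) = (∏ j, d j) * Real.exp (-z * ∑ j, δ j) := by
  have hsign (j : Fin n) : ∃ σ ≠ 0, ∀ᶠ t in atTop, 0 < σ * X j t :=
    forall_of_forall_of_add_one (P := fun j ↦ ∃ σ ≠ 0, ∀ᶠ t in atTop, 0 < σ * X j t)
      (fun j hj ↦ (h j).exists_eventually_mul_pos hj)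
      (exists_eventually_mul_pos_of_ne_zero
        ((h i).eventually_differentiableAt.mono fun _ ht ↦ ht.continuousAt) hX) j
  choose σ hσ hσX using hsign
  have hprod : ∏ j, σ j * d j / σ (j + 1) = ∏ j, d j := by
    rw [Finset.prod_div_distrib, prod_add_one σ, Finset.prod_mul_distrib,
      mul_div_cancel_left₀ _ (Finset.prod_ne_zero_iff.2 fun j _ ↦ hσ j)]
  rw [← hprod] at hd ⊢
  exact exists_prod_add_eq_of_eventually_pos (fun j ↦ (h j).const_mul (hσ j) (hσ (j + 1))) hd hδ hσX

end FeedbackCycles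

section CyclicSystem

variable {m : ℕ} {lam : ℕ → ℝ} {τ T : ℝ} {f x : ℕ → ℝ → ℝ}

theorem IsCyclicSolution.isFeedbackPair (hx : IsCyclicSolution (m + 1) lam τ f T x)
    (hlam : ∀ j < m + 1, 0 < lam j) (hτ : 0 ≤ τ) (hderiv : ∀ j < m + 1, deriv (f j) 0 ≠ 0)
    (hfeedback : ∀ j < m + 1, ∀ y ≠ 0, 0 < deriv (f j) 0 * (y * f j y)) (j : Fin (m + 1)) :
    IsFeedbackPair (lam j) (deriv (f j) 0) (if j = Fin.last m then τ else 0) (f j) (x j)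
      (x (j + 1 : Fin (m + 1))) := by
  refine ⟨hlam j j.2, by split_ifs <;> simp [hτ],
    (differentiableAt_of_deriv_ne_zero (hderiv j j.2)).hasDerivAt, hfeedback j j.2, ?_⟩
  filter_upwards [eventually_gt_atTop T] with t ht
  obtain ⟨hstep, hlast⟩ := hx.2.2 t ht
  induction j using Fin.lastCases with
  | last => simpa using hlast
  | cast j => simpa [Fin.ext_iff, j.2.ne] using hstep j (by omega)

theorem IsCyclicSolution.exists_prod_add_eq (hx : IsCyclicSolution (m + 1) lam τ f T x)
    (hlam : ∀ j < m + 1, 0 < lam j) (hτ : 0 < τ) (hderiv : ∀ j < m + 1, deriv (f j) 0 ≠ 0)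
    (hpos : ∀ j < m, ∀ y ≠ 0, 0 < y * f j y) (hneg : ∀ y ≠ 0, y * f m y < 0)
    {j : ℕ} (hj : j < m + 1) (hne : ∀ᶠ t in atTop, x j t ≠ 0) :
    ∃ z, ∏ i ∈ Finset.range (m + 1), (z + lam i) =
      (∏ i ∈ Finset.range (m + 1), deriv (f i) 0) * Real.exp (-z * τ) := by
  have hderiv_pos (i : ℕ) (hi : i < m) : 0 < deriv (f i) 0 :=
    deriv_pos_of_mul_pos (hpos i hi) (hderiv i (hi.trans m.lt_succ_self))
  have hderiv_neg : deriv (f m) 0 < 0 := deriv_neg_of_mul_neg hneg (hderiv m m.lt_succ_self)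
  have hfeedback (i : ℕ) (hi : i < m + 1) (y : ℝ) (hy : y ≠ 0) :
      0 < deriv (f i) 0 * (y * f i y) := by
    obtain hi | rfl := Nat.lt_succ_iff_lt_or_eq.1 hi
    · exact mul_pos (hderiv_pos i hi) (hpos i hi y hy)
    · exact mul_pos_of_neg_of_neg hderiv_neg (hneg y hy)
  have hprod : ∏ i : Fin (m + 1), deriv (f i) 0 < 0 := by
    rw [Fin.prod_univ_castSucc]
    exact mul_neg_of_pos_of_neg (Finset.prod_pos fun i _ ↦ hderiv_pos i i.2) hderiv_neg
  have hdelay : ∑ i : Fin (m + 1), (if i = Fin.last m then τ else 0) = τ := by simp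
  simpa only [Finset.prod_range, hdelay] using exists_prod_add_eq_of_eventually_ne_zero
    (i := ⟨j, hj⟩) (hx.isFeedbackPair hlam hτ.le hderiv hfeedback) hprod (hdelay.symm ▸ hτ) hne

end CyclicSystem

theorem all_solutions_oscillate_of_no_real_roots_general
    (n : ℕ) (lam : ℕ → ℝ) (hlam : ∀ j < n, 0 < lam j)
    (τ : ℝ) (hτ : 0 < τ) (f : ℕ → ℝ → ℝ)
    (hpos : ∀ j < n - 1, ∀ y : ℝ, y ≠ 0 → 0 < y * f j y)
    (hneg : ∀ y : ℝ, y ≠ 0 → y * f (n - 1) y < 0)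
    (hderiv0 : ∀ j < n, deriv (f j) 0 ≠ 0)
    (hnoreal : ∀ z : ℝ,
      (∏ j ∈ Finset.range n, (z + lam j))
        + (-(∏ j ∈ Finset.range n, deriv (f j) 0)) * Real.exp (-τ * z) ≠ 0) :
    ∀ (T : ℝ) (x : ℕ → ℝ → ℝ), IsCyclicSolution n lam τ f T x →
      ∀ j < n, ∀ s : ℝ, ∃ t : ℝ, s ≤ t ∧ x j t = 0 := by
  intro T x hx j hj s
  obtain _ | m := n
  · exact absurd hj (Nat.not_lt_zero j)
  by_contra! hne
  obtain ⟨z, hz⟩ := hx.exists_prod_add_eq hlam hτ hderiv0 hpos hneg hj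
    (eventually_atTop.2 ⟨s, hne⟩)
  apply hnoreal z
  rw [hz]
  ring_nf

/-- Theorem 1: if each `fⱼ` is differentiable near `0` with Hölder continuous
derivative and `fⱼ'(0) ≠ 0`, and the characteristic equation
`(z+λ₁)⋯(z+λₙ) + a e^{-τz} = 0` with `a = -f₁'(0)⋯fₙ'(0)` has no real roots,
then every solution of the cyclic system oscillates about zero: each component
has an unbounded set of zeros. -/
theorem all_solutions_oscillate_of_no_real_roots
    (n : ℕ) (hn : 0 < n) (lam : ℕ → ℝ) (hlam : ∀ j < n, 0 < lam j)
    (τ : ℝ) (hτ : 0 < τ) (f : ℕ → ℝ → ℝ) (hf : ∀ j < n, Continuous (f j))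
    (hpos : ∀ j < n - 1, ∀ y : ℝ, y ≠ 0 → 0 < y * f j y)
    (hneg : ∀ y : ℝ, y ≠ 0 → y * f (n - 1) y < 0)
    (M : ℝ) (hM : 0 < M) (hbdd : ∀ y : ℝ, f (n - 1) y ≤ M)
    (α : ℝ) (hα : α ∈ Set.Ioc (0 : ℝ) 1)
    (hholder : ∀ j < n, ∃ δ : ℝ, 0 < δ ∧ ∃ C : ℝ, 0 ≤ C ∧
      (∀ y ∈ Set.Ioo (-δ) δ, DifferentiableAt ℝ (f j) y) ∧
      (∀ y ∈ Set.Ioo (-δ) δ, ∀ z ∈ Set.Ioo (-δ) δ,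
        |deriv (f j) y - deriv (f j) z| ≤ C * |y - z| ^ α))
    (hderiv0 : ∀ j < n, deriv (f j) 0 ≠ 0)
    (hnoreal : ∀ z : ℝ,
      (∏ j ∈ Finset.range n, (z + lam j))
        + (-(∏ j ∈ Finset.range n, deriv (f j) 0)) * Real.exp (-τ * z) ≠ 0) :
    ∀ x : ℕ → ℝ → ℝ, IsCyclicSolution n lam τ f 0 x →
      ∀ j < n, ∀ s : ℝ, 0 ≤ s → ∃ t : ℝ, s ≤ t ∧ x j t = 0 :=
  fun x hx j hj s _ ↦ all_solutions_oscillate_of_no_real_roots_general n lam hlam τ hτ f hpos hneg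
    hderiv0 hnoreal 0 x hx j hj s
end

section
/- Let n be a positive integer, λ_1,…,λ_n positive reals, τ > 0, and f_1,…,f_n : ℝ → ℝ continuous, with f_j satisfying positive feedback for 1 ≤ j ≤ n−1 and f_n satisfying negative feedback. Assume each f_j is C² in a neighborhood of 0 with f_j′(0) ≠ 0, and set a = −f_1′(0)·f_2′(0)·⋯·f_n′(0) (so a > 0). If the characteristic equation (z+λ_1)(z+λ_2)⋯(z+λ_n) + a·e^{−τz} = 0 has a real (necessarily negative) root, then there exist T ∈ ℝ and a solution x = (x_1,…,x_n) of the cyclic system on [T,∞) such that x_j(t) ≠ 0 for every j = 1,…,n and every t ≥ T; in particular the system has a nonzero non-oscillating solution. -/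
/-! Let `z < 0` be a real root. The linearized system has a solution `c j * exp (z t)`, and writing
`x j t = c j * exp (z t) * w j t` turns the nonlinear system into `w j' = -m j (w j - G j (t, ·))`,
where `m j = z + λ j` and `G j (t, ·)`, applied to the next component, tends to the identity
exponentially fast. Whatever the sign of `m`, the bounded solution of `u' = -m (u - h)` is the
*positive* average `∫₀^∞ exp (-u) h (t - u / m) du` of the past (`m > 0`) or the future (`m < 0`) of
`h`. Since each `f j` may be replaced by a multiple of a monotone function near `0`, the system is a
fixed-point equation for an order-preserving map. That map fixes constants up to exponentially small
errors, so `1 - b j * exp (-δ t)` and `3 + b j * exp (-δ t)` are a lower and an upper barrier once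
`b` solves an affine cyclic recursion; this is solvable when `z - δ` is not a root, hence for
suitable small `δ`. Monotone iteration from the lower barrier converges to a fixed point `w` that
stays away from `0`. -/

open Real Set Filter Topology MeasureTheory

/-- The average of `t ↦ h (t - u / m)` against the exponential probability density on `u > 0`: the
bounded solution `y` of `y' = -m (y - h)`. It looks into the past of `t` if `m > 0` and into its
future if `m < 0`. -/
noncomputable def expAverage (m : ℝ) (h : ℝ → ℝ) (t : ℝ) : ℝ :=
  ∫ u in Ioi 0, exp (-u) * h (t - u / m)

section ExpAverage

variable {m M M' : ℝ} {h h' U : ℝ → ℝ}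

theorem integrableOn_exp_neg_mul_Ioi (hmeas : Measurable h) (hM : ∀ u, |h u| ≤ M) (a : ℝ) :
    IntegrableOn (fun u => exp (-u) * h u) (Ioi a) :=
  (integrableOn_exp_neg_Ioi a).mul_bdd (c := M) hmeas.aestronglyMeasurable (.of_forall hM)

theorem integrableOn_exp_neg_mul_comp_sub_div (hmeas : Measurable h) (hM : ∀ s, |h s| ≤ M)
    (t a : ℝ) : IntegrableOn (fun u => exp (-u) * h (t - u / m)) (Ioi a) :=
  integrableOn_exp_neg_mul_Ioi (by fun_prop) (fun _ => hM _) a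

theorem intervalIntegrable_exp_mul (hmeas : Measurable h) (hM : ∀ s, |h s| ≤ M) (a b : ℝ) :
    IntervalIntegrable (fun s => exp (m * s) * h s) volume a b :=
  intervalIntegrable_iff.2 <| Integrable.mul_bdd (c := M)
    (intervalIntegrable_iff.1 (Continuous.intervalIntegrable (by fun_prop) a b))
    hmeas.aestronglyMeasurable (.of_forall hM)

theorem expAverage_mono (hmeas : Measurable h) (hM : ∀ s, |h s| ≤ M) (hmeas' : Measurable h')
    (hM' : ∀ s, |h' s| ≤ M') (hle : h ≤ h') : expAverage m h ≤ expAverage m h' := fun t =>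
  setIntegral_mono (integrableOn_exp_neg_mul_comp_sub_div hmeas hM t 0)
    (integrableOn_exp_neg_mul_comp_sub_div hmeas' hM' t 0)
    fun _ => mul_le_mul_of_nonneg_left (hle _) (exp_pos _).le

theorem tendsto_expAverage {h : ℕ → ℝ → ℝ} {g : ℝ → ℝ} (hmeas : ∀ k, Measurable (h k))
    (hM : ∀ k s, |h k s| ≤ M) (hlim : Tendsto h atTop (𝓝 g)) :
    Tendsto (fun k => expAverage m (h k)) atTop (𝓝 (expAverage m g)) := by
  refine tendsto_pi_nhds.2 fun t =>
    tendsto_integral_of_dominated_convergence (fun u => exp (-u) * M) (fun k => by fun_prop)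
      ((integrableOn_exp_neg_Ioi 0).mul_const M) (fun k => .of_forall fun u => ?_)
      (.of_forall fun u => ((tendsto_pi_nhds.1 hlim) _).const_mul _)
  rw [norm_mul, norm_of_nonneg (exp_pos _).le]
  exact mul_le_mul_of_nonneg_left (hM k _) (exp_pos _).le

theorem setIntegral_Ioi_comp_add_right (g : ℝ → ℝ) (a b : ℝ) :
    ∫ u in Ioi a, g (u + b) = ∫ u in Ioi (a + b), g u := by
  simpa using (measurePreserving_add_right volume b).setIntegral_preimage_emb
    (measurableEmbedding_addRight b) g (Ioi (a + b))

theorem expAverage_eq_exp_mul_primitive (hm : m ≠ 0) (hmeas : Measurable h)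
    (hM : ∀ s, |h s| ≤ M) (t : ℝ) :
    expAverage m h t =
      exp (-m * t) * (expAverage m h 0 + m * ∫ s in (0 : ℝ)..t, exp (m * s) * h s) := by
  have hshift : expAverage m h t =
      exp (-m * t) * ∫ u in Ioi (-(m * t)), exp (-u) * h (0 - u / m) := by
    rw [← zero_add (-(m * t)), ← setIntegral_Ioi_comp_add_right, ← integral_const_mul, expAverage]
    refine integral_congr_ae (.of_forall fun u => ?_)
    simp only [← mul_assoc, ← exp_add]
    congr 2 <;> field_simp <;> ring
  have hsplit := intervalIntegral.integral_interval_add_Ioi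
    (integrableOn_exp_neg_mul_comp_sub_div (m := m) hmeas hM 0 (-(m * t)))
    (integrableOn_exp_neg_mul_comp_sub_div (m := m) hmeas hM 0 0)
  have hsubst : m * ∫ s in (0 : ℝ)..t, exp (m * s) * h s =
      ∫ u in -(m * t)..0, exp (-u) * h (0 - u / m) := by
    have := intervalIntegral.integral_comp_sub_div (a := -(m * t)) (b := 0)
      (fun s => exp (m * s) * h s) hm 0
    simpa [neg_div, mul_div_assoc, mul_div_cancel_left₀, hm, mul_neg, mul_div_cancel₀]
      using this.symm
  rw [hshift, hsubst, ← hsplit, expAverage, add_comm]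

theorem continuous_expAverage (hm : m ≠ 0) (hmeas : Measurable h) (hM : ∀ s, |h s| ≤ M) :
    Continuous (expAverage m h) := by
  have hprim := intervalIntegral.continuous_primitive
    (fun a b => intervalIntegrable_exp_mul (m := m) hmeas hM a b) 0
  rw [funext (expAverage_eq_exp_mul_primitive hm hmeas hM)]
  fun_prop

theorem hasDerivAt_expAverage (hm : m ≠ 0) (hmeas : Measurable h) (hM : ∀ s, |h s| ≤ M) {t : ℝ}
    (hcont : ContinuousAt h t) :
    HasDerivAt (expAverage m h) (-m * (expAverage m h t - h t)) t := by
  have hprim : HasDerivAt (fun t => ∫ s in (0 : ℝ)..t, exp (m * s) * h s)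
      (exp (m * t) * h t) t :=
    intervalIntegral.integral_hasDerivAt_right (intervalIntegrable_exp_mul hmeas hM 0 t)
      (Measurable.stronglyMeasurable (by fun_prop)).stronglyMeasurableAtFilter (by fun_prop)
  have hexp : HasDerivAt (fun t => exp (-m * t)) (exp (-m * t) * -m) t := by
    simpa using ((hasDerivAt_id t).const_mul (-m)).exp
  have hcancel : exp (-m * t) * exp (m * t) = 1 := by rw [← exp_add]; simp
  have hformula := expAverage_eq_exp_mul_primitive hm hmeas hM
  refine ((hexp.mul ((hprim.const_mul m).const_add _)).congr_of_eventuallyEq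
    (.of_forall hformula)).congr_deriv ?_
  linear_combination m * hformula t + (m * h t) * hcancel

theorem expAverage_eq_of_hasDerivAt (hm : m ≠ 0) (hmeas : Measurable h) (hM : ∀ s, |h s| ≤ M)
    (hU : Continuous U) (hUM : ∀ s, |U s| ≤ M) {E : Set ℝ} (hE : E.Countable)
    (hderiv : ∀ s ∉ E, HasDerivAt U (-m * (U s - h s)) s) : expAverage m h = U := by
  ext t
  have hE' : ((fun u => t - u / m) ⁻¹' E).Countable :=
    hE.preimage_of_injOn (by intro a _ b _ hab; field_simp at hab; linarith)
  have hprimitive (R : ℝ) : ∫ u in (0 : ℝ)..R, exp (-u) * h (t - u / m) =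
      U t - exp (-R) * U (t - R / m) := by
    rw [integral_eq_of_hasDerivAt_off_countable (fun u => -(exp (-u) * U (t - u / m))) _ hE'
      (by fun_prop)]
    · simp; ring
    · intro u hu
      have hexp : HasDerivAt (fun u => exp (-u)) (-exp (-u)) u := by
        simpa using (hasDerivAt_neg u).exp
      have hinner : HasDerivAt (fun u => t - u / m) (-(1 / m)) u :=
        ((hasDerivAt_id u).div_const m).const_sub t
      refine (hexp.mul ((hderiv _ hu.2).comp u hinner)).neg.congr_deriv ?_
      simp only [Function.comp]
      field_simp
      ring
    · exact intervalIntegrable_iff.2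
        ((integrableOn_exp_neg_mul_comp_sub_div hmeas hM t _).mono_set Ioc_subset_Ioi_self)
  have hdecay : Tendsto (fun R => exp (-R) * U (t - R / m)) atTop (𝓝 0) :=
    (tendsto_exp_neg_atTop_nhds_zero).zero_mul_isBoundedUnder_le
      (isBoundedUnder_of ⟨M, fun R => hUM _⟩)
  refine tendsto_nhds_unique (intervalIntegral_tendsto_integral_Ioi 0
    (integrableOn_exp_neg_mul_comp_sub_div hmeas hM t 0) tendsto_id) ?_
  simpa [hprimitive] using hdecay.const_sub (U t)

end ExpAverage

section Barrier

/-- The profile `κ + b exp (-δ t)` of a sub- or supersolution, frozen at its value at `S` before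
time `S`. -/
noncomputable def expBarrier (κ b δ S t : ℝ) : ℝ :=
  κ + b * exp (-δ * max t S)

/-- The input whose exponential average with rate `m` is `expBarrier κ b δ S`. -/
noncomputable def expBarrierSource (m κ b δ S s : ℝ) : ℝ :=
  if s < S then κ + b * exp (-δ * S) else κ + b * (1 - δ / m) * exp (-δ * s)

variable {m M κ b δ S t : ℝ} {h : ℝ → ℝ}

theorem expBarrier_of_le (ht : S ≤ t) : expBarrier κ b δ S t = κ + b * exp (-δ * t) := by
  rw [expBarrier, max_eq_left ht]

theorem continuous_expBarrier : Continuous (expBarrier κ b δ S) := by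
  unfold expBarrier
  fun_prop

theorem measurable_expBarrierSource : Measurable (expBarrierSource m κ b δ S) :=
  Measurable.ite measurableSet_Iio (by fun_prop) (by fun_prop)

theorem exp_neg_mul_le_of_le (hδ : 0 ≤ δ) (ht : S ≤ t) : exp (-δ * t) ≤ exp (-δ * S) :=
  exp_le_exp.2 (by nlinarith)

theorem abs_add_mul_exp_le (hδ : 0 ≤ δ) (ht : S ≤ t) :
    |κ + b * exp (-δ * t)| ≤ |κ| + |b| * exp (-δ * S) := by
  grw [abs_add_le, abs_mul, abs_exp, exp_neg_mul_le_of_le hδ ht]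

theorem abs_expBarrier_le (hδ : 0 ≤ δ) (t : ℝ) :
    |expBarrier κ b δ S t| ≤ |κ| + |b| * exp (-δ * S) :=
  abs_add_mul_exp_le hδ (le_max_right t S)

theorem abs_expBarrierSource_le (hδ : 0 ≤ δ) (s : ℝ) :
    |expBarrierSource m κ b δ S s| ≤
      max (|κ| + |b| * exp (-δ * S)) (|κ| + |b * (1 - δ / m)| * exp (-δ * S)) := by
  unfold expBarrierSource
  split_ifs with hs
  · exact le_max_of_le_left (abs_add_mul_exp_le hδ le_rfl)
  · exact le_max_of_le_right (abs_add_mul_exp_le hδ (not_lt.1 hs))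

theorem hasDerivAt_expBarrier (hm : m ≠ 0) (ht : t ≠ S) :
    HasDerivAt (expBarrier κ b δ S)
      (-m * (expBarrier κ b δ S t - expBarrierSource m κ b δ S t)) t := by
  rcases ht.lt_or_gt with ht | ht
  · have hconst : expBarrier κ b δ S =ᶠ[𝓝 t] fun _ => κ + b * exp (-δ * S) := by
      filter_upwards [eventually_lt_nhds ht] with s hs
      rw [expBarrier, max_eq_right hs.le]
    refine ((hasDerivAt_const t _).congr_of_eventuallyEq hconst).congr_deriv ?_
    rw [hconst.eq_of_nhds, expBarrierSource, if_pos ht, sub_self, mul_zero]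
  · have hexp : expBarrier κ b δ S =ᶠ[𝓝 t] fun s => κ + b * exp (-δ * s) := by
      filter_upwards [eventually_gt_nhds ht] with s hs
      exact expBarrier_of_le hs.le
    have hderiv := ((((hasDerivAt_id t).const_mul (-δ)).exp).const_mul b).const_add κ
    refine (hderiv.congr_of_eventuallyEq hexp).congr_deriv ?_
    rw [hexp.eq_of_nhds, expBarrierSource, if_neg ht.not_gt]
    simp only [id]
    field_simp
    ring

theorem expAverage_expBarrierSource (hm : m ≠ 0) (hδ : 0 ≤ δ) :
    expAverage m (expBarrierSource m κ b δ S) = expBarrier κ b δ S :=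
  expAverage_eq_of_hasDerivAt hm measurable_expBarrierSource (abs_expBarrierSource_le hδ)
    continuous_expBarrier (fun s => le_max_of_le_left (abs_expBarrier_le hδ s))
    (countable_singleton S) fun _ hs => hasDerivAt_expBarrier hm hs

theorem expBarrier_le_expAverage (hm : m ≠ 0) (hδ : 0 ≤ δ) (hmeas : Measurable h)
    (hM : ∀ s, |h s| ≤ M) (hle : expBarrierSource m κ b δ S ≤ h) :
    expBarrier κ b δ S ≤ expAverage m h :=
  (expAverage_expBarrierSource hm hδ).ge.trans <|
    expAverage_mono measurable_expBarrierSource (abs_expBarrierSource_le hδ) hmeas hM hle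

theorem expAverage_le_expBarrier (hm : m ≠ 0) (hδ : 0 ≤ δ) (hmeas : Measurable h)
    (hM : ∀ s, |h s| ≤ M) (hle : h ≤ expBarrierSource m κ b δ S) :
    expAverage m h ≤ expBarrier κ b δ S :=
  (expAverage_mono hmeas hM measurable_expBarrierSource (abs_expBarrierSource_le hδ) hle).trans
    (expAverage_expBarrierSource hm hδ).le

end Barrier

theorem exists_isFixedPt_of_monotoneOn {α : Type*} [ConditionallyCompleteLattice α]
    [TopologicalSpace α] [SupConvergenceClass α] [T2Space α] {D : Set α} {N : α → α} {u₀ : α}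
    (hclosed : IsSeqClosed D) (hbdd : BddAbove D) (hmaps : MapsTo N D D) (hmono : MonotoneOn N D)
    (hcont : ∀ (u : ℕ → α) (v : α), (∀ k, u k ∈ D) → Tendsto u atTop (𝓝 v) →
      Tendsto (fun k => N (u k)) atTop (𝓝 (N v)))
    (hu₀ : u₀ ∈ D) (hle : u₀ ≤ N u₀) : ∃ v ∈ D, Function.IsFixedPt N v := by
  have hmem (k : ℕ) : N^[k] u₀ ∈ D := hmaps.iterate k hu₀
  have hiterate : Monotone fun k => N^[k] u₀ := by
    refine monotone_nat_of_le_succ fun k => ?_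
    induction k with
    | zero => exact hle
    | succ k ih =>
      simpa only [Function.iterate_succ_apply'] using hmono (hmem k) (hmem (k + 1)) ih
  have hlim := tendsto_atTop_ciSup hiterate
    (hbdd.mono (range_subset_iff.2 hmem))
  refine ⟨_, hclosed hmem hlim, tendsto_nhds_unique (hcont _ _ hmem hlim) ?_⟩
  simpa only [Function.iterate_succ_apply'] using (tendsto_add_atTop_iff_nat 1).2 hlim

/-- The function `h` on `[S, ∞)` with its history before `S` replaced by the constant `2`, the
midpoint of the limits `1` and `3` of the barriers. -/
noncomputable def withHistory (S : ℝ) (h : ℝ → ℝ) (t : ℝ) : ℝ :=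
  if t < S then 2 else h t

section WithHistory

variable {S t M : ℝ} {h h' : ℝ → ℝ}

theorem withHistory_of_lt (ht : t < S) : withHistory S h t = 2 :=
  if_pos ht

theorem withHistory_of_le (ht : S ≤ t) : withHistory S h t = h t :=
  if_neg ht.not_gt

theorem measurable_withHistory (hmeas : Measurable h) : Measurable (withHistory S h) :=
  Measurable.ite measurableSet_Iio measurable_const hmeas

theorem withHistory_mono (hle : ∀ t, S ≤ t → h t ≤ h' t) : withHistory S h ≤ withHistory S h' := by
  intro t
  rcases lt_or_ge t S with ht | ht
  · rw [withHistory_of_lt ht, withHistory_of_lt ht]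
  · rw [withHistory_of_le ht, withHistory_of_le ht]
    exact hle t ht

theorem tendsto_withHistory {h : ℕ → ℝ → ℝ} {g : ℝ → ℝ}
    (hlim : Tendsto h atTop (𝓝 g)) :
    Tendsto (fun k => withHistory S (h k)) atTop (𝓝 (withHistory S g)) := by
  refine tendsto_pi_nhds.2 fun t => ?_
  unfold withHistory
  split_ifs
  · exact tendsto_const_nhds
  · exact tendsto_pi_nhds.1 hlim t

end WithHistory

/-- A delay system `w j' = -rate j * (w j - field j t (w (next j) (t - delay j)))` on
`[start, ∞)`, with monotone fields that are exponentially close to the identity, together with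
coefficients for which `1 - coeff j * exp (-decay * t)` and `3 + coeff j * exp (-decay * t)` are a
sub- and a supersolution. The bounds on `coeff` keep both within `[1/2, 7/2]`. -/
structure BarrierSystem (ι : Type*) where
  next : ι → ι
  delay : ι → ℝ
  rate : ι → ℝ
  field : ι → ℝ → ℝ → ℝ
  coeff : ι → ℝ
  decay : ℝ
  start : ℝ
  delay_nonneg : ∀ j, 0 ≤ delay j
  rate_ne_zero : ∀ j, rate j ≠ 0
  continuous_field : ∀ j, Continuous (Function.uncurry (field j))
  monotone_field : ∀ j s, start ≤ s → Monotone (field j s)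
  abs_field_sub_le : ∀ j s, start ≤ s → ∀ w ∈ Icc (0 : ℝ) 4,
    |field j s w - w| ≤ exp (-decay * s)
  decay_nonneg : 0 ≤ decay
  coeff_mul : ∀ j, coeff j * (1 - decay / rate j) = coeff (next j) * exp (decay * delay j) + 1
  abs_coeff_mul_le : ∀ j, |coeff j| * exp (-decay * start) ≤ 1 / 2
  abs_delayed_coeff_mul_le : ∀ j,
    |coeff (next j)| * exp (decay * delay j) * exp (-decay * start) ≤ 1 / 2

namespace BarrierSystem

variable {ι : Type*} (P : BarrierSystem ι) (w : ι → ℝ → ℝ) (j : ι)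

/-- The subsolution with limit `1`. -/
noncomputable def lowerBarrier : ℝ → ℝ :=
  withHistory P.start (expBarrier 1 (-P.coeff j) P.decay P.start)

/-- The supersolution with limit `3`. -/
noncomputable def upperBarrier : ℝ → ℝ :=
  withHistory P.start (expBarrier 3 (P.coeff j) P.decay P.start)

/-- The inhomogeneity `h` in the equation `y' = -rate j * (y - h)` that `w` induces on the `j`-th
component. -/
noncomputable def input : ℝ → ℝ :=
  withHistory P.start fun s => P.field j s (w (P.next j) (s - P.delay j))

/-- The order-preserving map whose fixed points solve the system. -/
noncomputable def averagingMap : ℝ → ℝ :=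
  withHistory P.start (expAverage (P.rate j) (P.input w j))

/-- The measurable families between the barriers, the domain of the monotone iteration. -/
def between : Set (ι → ℝ → ℝ) :=
  {w | ∀ j, Measurable (w j)} ∩ Icc P.lowerBarrier P.upperBarrier

variable {P w} {j} {s t : ℝ}

theorem abs_mul_exp_le (ht : P.start ≤ t) : |P.coeff j * exp (-P.decay * t)| ≤ 1 / 2 := by
  rw [abs_mul, abs_exp]
  grw [exp_neg_mul_le_of_le P.decay_nonneg ht, P.abs_coeff_mul_le j]

theorem abs_delayed_mul_exp_le (ht : P.start ≤ t) :
    |P.coeff (P.next j) * exp (P.decay * P.delay j) * exp (-P.decay * t)| ≤ 1 / 2 := by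
  rw [abs_mul, abs_mul, abs_exp, abs_exp]
  grw [exp_neg_mul_le_of_le P.decay_nonneg ht, P.abs_delayed_coeff_mul_le j]

theorem lowerBarrier_of_le (ht : P.start ≤ t) :
    P.lowerBarrier j t = 1 - P.coeff j * exp (-P.decay * t) := by
  rw [lowerBarrier, withHistory_of_le ht, expBarrier_of_le ht]
  ring

theorem upperBarrier_of_le (ht : P.start ≤ t) :
    P.upperBarrier j t = 3 + P.coeff j * exp (-P.decay * t) := by
  rw [upperBarrier, withHistory_of_le ht, expBarrier_of_le ht]

theorem mem_Icc_of_mem_between (hw : w ∈ P.between) (j : ι) (t : ℝ) :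
    w j t ∈ Icc (1 / 2 : ℝ) (7 / 2) := by
  have hlo := hw.2.1 j t
  have hhi := hw.2.2 j t
  rcases lt_or_ge t P.start with ht | ht
  · rw [lowerBarrier, withHistory_of_lt ht] at hlo
    rw [upperBarrier, withHistory_of_lt ht] at hhi
    constructor <;> linarith
  · rw [lowerBarrier_of_le ht] at hlo
    rw [upperBarrier_of_le ht] at hhi
    have := abs_le.1 (P.abs_mul_exp_le (j := j) ht)
    constructor <;> linarith

theorem exp_mul_delay_shift : exp (-P.decay * (s - P.delay j)) =
    exp (P.decay * P.delay j) * exp (-P.decay * s) := by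
  rw [← exp_add]
  ring_nf

theorem delayed_mem_Icc (hw : w ∈ P.between) (hs : P.start ≤ s) :
    w (P.next j) (s - P.delay j) ∈
      Icc (1 - P.coeff (P.next j) * exp (P.decay * P.delay j) * exp (-P.decay * s))
        (3 + P.coeff (P.next j) * exp (P.decay * P.delay j) * exp (-P.decay * s)) := by
  have hlo := hw.2.1 (P.next j) (s - P.delay j)
  have hhi := hw.2.2 (P.next j) (s - P.delay j)
  rcases lt_or_ge (s - P.delay j) P.start with ht | ht
  · rw [lowerBarrier, withHistory_of_lt ht] at hlo
    rw [upperBarrier, withHistory_of_lt ht] at hhi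
    have := abs_le.1 (P.abs_delayed_mul_exp_le (j := j) hs)
    constructor <;> linarith
  · rw [lowerBarrier_of_le ht, exp_mul_delay_shift, ← mul_assoc] at hlo
    rw [upperBarrier_of_le ht, exp_mul_delay_shift, ← mul_assoc] at hhi
    exact ⟨hlo, hhi⟩

theorem input_of_le (hs : P.start ≤ s) :
    P.input w j s = P.field j s (w (P.next j) (s - P.delay j)) :=
  withHistory_of_le hs

theorem abs_input_sub_le (hw : w ∈ P.between) (hs : P.start ≤ s) :
    |P.input w j s - w (P.next j) (s - P.delay j)| ≤ exp (-P.decay * s) := by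
  rw [input_of_le hs]
  exact P.abs_field_sub_le j s hs _
    (Icc_subset_Icc (by norm_num) (by norm_num) (mem_Icc_of_mem_between hw _ _))

theorem measurable_input (hw : ∀ j, Measurable (w j)) : Measurable (P.input w j) :=
  measurable_withHistory <| (P.continuous_field j).measurable.comp
    (measurable_id.prodMk ((hw _).comp (measurable_id.sub_const _)))

theorem abs_input_le (hw : w ∈ P.between) (s : ℝ) :
    |P.input w j s| ≤ 4 + exp (-P.decay * P.start) := by
  rcases lt_or_ge s P.start with hs | hs
  · rw [input, withHistory_of_lt hs, abs_two]
    linarith [exp_pos (-P.decay * P.start)]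
  · have hinput := abs_le.1 (abs_input_sub_le (j := j) hw hs)
    have hw' := mem_Icc_of_mem_between hw (P.next j) (s - P.delay j)
    have hexp := exp_neg_mul_le_of_le P.decay_nonneg hs
    refine abs_le.2 ⟨?_, ?_⟩ <;> linarith [hw'.1, hw'.2]

theorem source_le_input (hw : w ∈ P.between) :
    expBarrierSource (P.rate j) 1 (-P.coeff j) P.decay P.start ≤ P.input w j := by
  intro s
  rcases lt_or_ge s P.start with hs | hs
  · rw [expBarrierSource, if_pos hs, input, withHistory_of_lt hs]
    linarith [(abs_le.1 (P.abs_mul_exp_le (j := j) le_rfl)).1]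
  · rw [expBarrierSource, if_neg hs.not_gt, neg_mul, P.coeff_mul]
    linarith [(delayed_mem_Icc (j := j) hw hs).1, (abs_le.1 (abs_input_sub_le (j := j) hw hs)).1]

theorem input_le_source (hw : w ∈ P.between) :
    P.input w j ≤ expBarrierSource (P.rate j) 3 (P.coeff j) P.decay P.start := by
  intro s
  rcases lt_or_ge s P.start with hs | hs
  · rw [expBarrierSource, if_pos hs, input, withHistory_of_lt hs]
    linarith [(abs_le.1 (P.abs_mul_exp_le (j := j) le_rfl)).1]
  · rw [expBarrierSource, if_neg hs.not_gt, P.coeff_mul]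
    linarith [(delayed_mem_Icc (j := j) hw hs).2, (abs_le.1 (abs_input_sub_le (j := j) hw hs)).2]

theorem averagingMap_mem_Icc (hw : w ∈ P.between) :
    P.averagingMap w ∈ Icc P.lowerBarrier P.upperBarrier :=
  ⟨fun j => withHistory_mono fun t _ => expBarrier_le_expAverage (P.rate_ne_zero j)
      P.decay_nonneg (measurable_input hw.1) (abs_input_le hw) (source_le_input hw) t,
    fun j => withHistory_mono fun t _ => expAverage_le_expBarrier (P.rate_ne_zero j)
      P.decay_nonneg (measurable_input hw.1) (abs_input_le hw) (input_le_source hw) t⟩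

theorem continuous_expAverage_input (hw : w ∈ P.between) :
    Continuous (expAverage (P.rate j) (P.input w j)) :=
  continuous_expAverage (P.rate_ne_zero j) (measurable_input hw.1) (abs_input_le hw)

theorem mapsTo_averagingMap : MapsTo P.averagingMap P.between P.between := fun _ hw =>
  ⟨fun _ => measurable_withHistory (continuous_expAverage_input hw).measurable,
    averagingMap_mem_Icc hw⟩

theorem monotoneOn_averagingMap : MonotoneOn P.averagingMap P.between := by
  intro w hw w' hw' hle j
  have hinput : P.input w j ≤ P.input w' j :=
    withHistory_mono fun s hs => P.monotone_field j s hs (hle _ _)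
  exact withHistory_mono fun t _ => expAverage_mono (measurable_input hw.1) (abs_input_le hw)
    (measurable_input hw'.1) (abs_input_le hw') hinput t

theorem tendsto_averagingMap {u : ℕ → ι → ℝ → ℝ} (hu : ∀ k, u k ∈ P.between)
    (hlim : Tendsto u atTop (𝓝 w)) :
    Tendsto (fun k => P.averagingMap (u k)) atTop (𝓝 (P.averagingMap w)) := by
  refine tendsto_pi_nhds.2 fun j => tendsto_withHistory <|
    tendsto_expAverage (fun k => measurable_input (hu k).1) (fun k => abs_input_le (hu k)) <|
      tendsto_withHistory <| tendsto_pi_nhds.2 fun s => ?_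
  have hvalue := tendsto_pi_nhds.1 (tendsto_pi_nhds.1 hlim (P.next j)) (s - P.delay j)
  exact ((P.continuous_field j).tendsto (s, _)).comp (tendsto_const_nhds.prodMk_nhds hvalue)

theorem isSeqClosed_between : IsSeqClosed P.between := fun _ _ hu hlim =>
  ⟨fun j => measurable_of_tendsto_metrizable (fun k => (hu k).1 j) (tendsto_pi_nhds.1 hlim j),
    isClosed_Icc.isSeqClosed (fun k => (hu k).2) hlim⟩

theorem lowerBarrier_mem_between : P.lowerBarrier ∈ P.between := by
  refine ⟨fun j => measurable_withHistory continuous_expBarrier.measurable, le_rfl,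
    fun j => withHistory_mono fun t ht => ?_⟩
  rw [expBarrier_of_le ht, expBarrier_of_le ht]
  linarith [(abs_le.1 (P.abs_mul_exp_le (j := j) ht)).1]

theorem exists_isFixedPt_averagingMap : ∃ w ∈ P.between, Function.IsFixedPt P.averagingMap w :=
  exists_isFixedPt_of_monotoneOn isSeqClosed_between ⟨_, fun _ hw => hw.2.2⟩ mapsTo_averagingMap
    monotoneOn_averagingMap (fun _ _ => tendsto_averagingMap) lowerBarrier_mem_between
    (averagingMap_mem_Icc lowerBarrier_mem_between).1

theorem eqOn_expAverage_of_isFixedPt (hfix : Function.IsFixedPt P.averagingMap w) (j : ι) :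
    EqOn (w j) (expAverage (P.rate j) (P.input w j)) (Ici P.start) := fun t ht => by
  rw [← congrFun (congrFun hfix j) t, averagingMap, withHistory_of_le ht]

theorem continuousOn_of_isFixedPt (hw : w ∈ P.between)
    (hfix : Function.IsFixedPt P.averagingMap w) (j : ι) : ContinuousOn (w j) (Ici P.start) :=
  (continuous_expAverage_input hw).continuousOn.congr (eqOn_expAverage_of_isFixedPt hfix j)

theorem continuousAt_input (hw : ∀ j, ContinuousOn (w j) (Ici P.start))
    (ht : P.start + P.delay j < t) : ContinuousAt (P.input w j) t := by
  have hstart : P.start < t := by linarith [P.delay_nonneg j]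
  have hdelayed : ContinuousAt (fun s => w (P.next j) (s - P.delay j)) t :=
    ((hw _).continuousAt (Ici_mem_nhds (by linarith))).comp (continuousAt_id.sub_const _)
  refine ((P.continuous_field j).continuousAt.comp (continuousAt_id.prodMk hdelayed)).congr ?_
  filter_upwards [eventually_gt_nhds hstart] with s hs
  exact (input_of_le hs.le).symm

theorem hasDerivAt_of_isFixedPt (hw : w ∈ P.between)
    (hfix : Function.IsFixedPt P.averagingMap w) (ht : P.start + P.delay j < t) :
    HasDerivAt (w j)
      (-P.rate j * (w j t - P.field j t (w (P.next j) (t - P.delay j)))) t := by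
  have hstart : P.start < t := by linarith [P.delay_nonneg j]
  have hcont := continuousAt_input (continuousOn_of_isFixedPt hw hfix) ht
  have heq := eqOn_expAverage_of_isFixedPt hfix j
  rw [← input_of_le hstart.le, heq hstart.le]
  exact (hasDerivAt_expAverage (P.rate_ne_zero j) (measurable_input hw.1) (abs_input_le hw)
    hcont).congr_of_eventuallyEq (heq.eventuallyEq_of_mem (Ici_mem_nhds hstart))

theorem exists_solution (P : BarrierSystem ι) : ∃ w : ι → ℝ → ℝ, ∀ j,
    ContinuousOn (w j) (Ici P.start) ∧ (∀ t, w j t ∈ Icc (1 / 2 : ℝ) (7 / 2)) ∧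
      ∀ t, P.start + P.delay j < t → HasDerivAt (w j)
        (-P.rate j * (w j t - P.field j t (w (P.next j) (t - P.delay j)))) t :=
  let ⟨w, hw, hfix⟩ := P.exists_isFixedPt_averagingMap
  ⟨w, fun j => ⟨continuousOn_of_isFixedPt hw hfix j, mem_Icc_of_mem_between hw j,
    fun _ => hasDerivAt_of_isFixedPt hw hfix⟩⟩

end BarrierSystem

theorem isBigO_sub_sub_smul_deriv {E : Type*} [NormedAddCommGroup E] [NormedSpace ℝ E]
    {f : ℝ → E} {a : ℝ} (hf : ContDiffAt ℝ 2 f a) :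
    (fun y => f y - f a - (y - a) • deriv f a) =O[𝓝 a] fun y => (y - a) ^ 2 := by
  have hdiff : ∀ᶠ y in 𝓝 a, DifferentiableAt ℝ f y :=
    (hf.eventually (by simp)).mono fun y hy => hy.differentiableAt two_ne_zero
  have hderiv : ContDiffAt ℝ 1 (deriv f) a := hf.derivWithin (by norm_num)
  obtain ⟨K, hK⟩ := (hderiv.differentiableAt one_ne_zero).isBigO_sub.bound
  obtain ⟨ε, hε, hball⟩ := Metric.eventually_nhds_iff_ball.1 (hdiff.and hK)
  refine .of_bound |K| (Metric.eventually_nhds_iff_ball.2 ⟨ε, hε, fun y hy => ?_⟩)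
  have hsub : Metric.closedBall a (dist y a) ⊆ Metric.ball a ε :=
    Metric.closedBall_subset_ball hy
  have hmvt := (convex_closedBall a (dist y a)).norm_image_sub_le_of_norm_hasDerivWithin_le
    (f := fun x => f x - (x - a) • deriv f a) (f' := fun x => deriv f x - deriv f a)
    (C := |K| * |y - a|) (x := a) (y := y) (fun x hx => ?_) (fun x hx => ?_)
    (Metric.mem_closedBall_self dist_nonneg) (Metric.mem_closedBall.2 le_rfl)
  · rw [norm_pow, pow_two, ← mul_assoc]
    simpa [sub_right_comm] using hmvt
  · have hlinear := ((hasDerivAt_id x).sub_const a).smul_const (deriv f a)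
    rw [one_smul] at hlinear
    exact ((hball x (hsub hx)).1.hasDerivAt.sub hlinear).hasDerivWithinAt
  · grw [(hball x (hsub hx)).2, le_abs_self K]
    exact mul_le_mul_of_nonneg_left (Metric.mem_closedBall.1 hx) (abs_nonneg K)

theorem exists_monotone_extension {f : ℝ → ℝ} (hf : ContDiffAt ℝ 2 f 0) (h0 : f 0 = 0)
    (hd : deriv f 0 = 1) : ∃ g : ℝ → ℝ, Continuous g ∧ Monotone g ∧ g =ᶠ[𝓝 0] f ∧
      ∃ B, ∀ y, |g y - y| ≤ B * y ^ 2 := by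
  -- Near `0`, `f y - y` has Lipschitz constant `1`; adding `y` to any extension of it with the same
  -- constant gives a globally monotone function.
  have hstrict : HasStrictDerivAt (fun y => f y - y) 0 0 :=
    ((hf.hasStrictDerivAt two_ne_zero).sub (hasStrictDerivAt_id 0)).congr_deriv (by simp [hd])
  obtain ⟨s, hs, hlip⟩ := hstrict.hasStrictFDerivAt.exists_lipschitzOnWith_of_nnnorm_lt 1 (by simp)
  obtain ⟨ρ, hρ, hρs⟩ := hlip.extend_real
  have hρf : (fun y => y + ρ y) =ᶠ[𝓝 0] f := by
    filter_upwards [hs] with y hy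
    rw [← hρs hy, add_sub_cancel]
  have hρ0 : ρ 0 = 0 := by simpa [h0] using (hρs (mem_of_mem_nhds hs)).symm
  have hρlip (y y' : ℝ) : |ρ y - ρ y'| ≤ |y - y'| := by simpa [dist_eq] using hρ.dist_le_mul y y'
  refine ⟨fun y => y + ρ y, continuous_id.add hρ.continuous, fun y y' hy => ?_, hρf, ?_⟩
  · have := (hρlip y y').trans_eq (abs_of_nonpos (sub_nonpos.2 hy))
    change y + ρ y ≤ y' + ρ y'
    linarith [(abs_le.1 this).2]
  · obtain ⟨K, hK⟩ := (isBigO_sub_sub_smul_deriv hf).bound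
    obtain ⟨ε, hε, hball⟩ := Metric.eventually_nhds_iff_ball.1 (hK.and hρf)
    refine ⟨max K ε⁻¹, fun y => ?_⟩
    rw [add_sub_cancel_left]
    by_cases hy : y ∈ Metric.ball 0 ε
    · obtain ⟨hquad, heq⟩ := hball y hy
      grw [← le_max_left]
      simpa [h0, hd, ← heq] using hquad
    · have hεy : ε ≤ |y| := by simpa using hy
      grw [← le_max_right]
      calc |ρ y| ≤ |y| := by simpa [hρ0] using hρlip y 0
        _ ≤ ε⁻¹ * y ^ 2 := by
          rw [← sq_abs, inv_mul_eq_div, le_div_iff₀ hε]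
          nlinarith [abs_nonneg y]

theorem eventually_mul_exp_le {k ε : ℝ} (hk : k < 0) (hε : 0 < ε) (K : ℝ) :
    ∀ᶠ t in atTop, K * exp (k * t) ≤ ε := by
  have hlim : Tendsto (fun t => K * exp (k * t)) atTop (𝓝 (K * 0)) :=
    (tendsto_exp_atBot.comp (tendsto_id.const_mul_atTop_of_neg hk)).const_mul K
  rw [mul_zero] at hlim
  exact hlim.eventually (Iic_mem_nhds hε)

theorem monotone_comp_mul_div {g : ℝ → ℝ} (hg : Monotone g) (r : ℝ) :
    Monotone fun w => g (r * w) / r := by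
  intro w w' hw
  rcases le_total 0 r with hr | hr
  · exact div_le_div_of_nonneg_right (hg (mul_le_mul_of_nonneg_left hw hr)) hr
  · exact div_le_div_of_nonpos_of_le hr (hg (mul_le_mul_of_nonpos_left hw hr))

theorem abs_comp_mul_div_sub_le {g : ℝ → ℝ} {B : ℝ} (hB : ∀ y, |g y - y| ≤ B * y ^ 2) {r : ℝ}
    (hr : r ≠ 0) (w : ℝ) : |g (r * w) / r - w| ≤ B * |r| * w ^ 2 := by
  have hfactor : g (r * w) / r - w = (g (r * w) - r * w) / r := by field_simp
  rw [hfactor, abs_div, div_le_iff₀ (abs_pos.2 hr)]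
  calc |g (r * w) - r * w| ≤ B * (r * w) ^ 2 := hB _
    _ = B * |r| * w ^ 2 * |r| := by rw [mul_pow, ← sq_abs r]; ring

theorem exists_rescaled_field {f : ℝ → ℝ} (hf : ContDiffAt ℝ 2 f 0) (h0 : f 0 = 0)
    (hd : deriv f 0 ≠ 0) {z δ C : ℝ} (hz : z < 0) (hδ : δ < -z) (hC : C ≠ 0) :
    ∃ G : ℝ → ℝ → ℝ, Continuous (Function.uncurry G) ∧ (∀ t, Monotone (G t)) ∧
      ∀ᶠ t in atTop, ∀ w ∈ Icc (0 : ℝ) 4, |G t w - w| ≤ exp (-δ * t) ∧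
        f (C * exp (z * t) * w) = deriv f 0 * (C * exp (z * t)) * G t w := by
  obtain ⟨g, hgcont, hgmono, hgf, B, hB⟩ := exists_monotone_extension (hf.div_const (deriv f 0))
    (by rw [h0, zero_div]) (by rw [deriv_div_const, div_self hd])
  obtain ⟨ε, hε, hball⟩ := Metric.eventually_nhds_iff_ball.1 hgf
  have hr (t : ℝ) : C * exp (z * t) ≠ 0 := mul_ne_zero hC (exp_pos _).ne'
  refine ⟨fun t w => g (C * exp (z * t) * w) / (C * exp (z * t)), ?_,
    fun t => monotone_comp_mul_div hgmono _, ?_⟩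
  · exact (by fun_prop : Continuous fun p : ℝ × ℝ => g (C * exp (z * p.1) * p.2)).div₀
      (by fun_prop) fun p => hr p.1
  filter_upwards [eventually_mul_exp_le (by linarith : z + δ < 0) one_pos (16 * |B| * |C|),
    eventually_mul_exp_le hz (half_pos hε) (4 * |C|)] with t hquad hsmall w hw
  have habs : |C * exp (z * t)| = |C| * exp (z * t) := by rw [abs_mul, abs_exp]
  have hw_sq : w ^ 2 ≤ 16 := by nlinarith [hw.1, hw.2]
  constructor
  · calc _ ≤ B * |C * exp (z * t)| * w ^ 2 := abs_comp_mul_div_sub_le hB (hr t) w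
      _ ≤ |B| * |C * exp (z * t)| * 16 := by gcongr; exact le_abs_self B
      _ = 16 * |B| * |C| * exp ((z + δ) * t) * exp (-δ * t) := by
        rw [habs, mul_assoc _ (exp ((z + δ) * t)), ← exp_add]
        ring_nf
      _ ≤ exp (-δ * t) := mul_le_of_le_one_left (exp_pos _).le hquad
  · have hmem : C * exp (z * t) * w ∈ Metric.ball 0 ε := by
      rw [mem_ball_zero_iff, norm_eq_abs, abs_mul, habs, abs_of_nonneg hw.1]
      have : 0 ≤ |C| * exp (z * t) := by positivity
      nlinarith [hw.2]
    rw [hball _ hmem]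
    field_simp [hr t]

theorem hasDerivAt_mul_exp_mul {w : ℝ → ℝ} {c z m G t : ℝ}
    (hw : HasDerivAt w (-m * (w t - G)) t) :
    HasDerivAt (fun s => c * exp (z * s) * w s)
      (-(m - z) * (c * exp (z * t) * w t) + c * m * exp (z * t) * G) t := by
  have hexp := ((((hasDerivAt_id t).const_mul z).exp).const_mul c).mul hw
  refine hexp.congr_deriv ?_
  simp only [id]
  ring

theorem exists_nonvanishing_solution {ι : Type*} [Finite ι] {σ : ι → ι} {τ lam c a : ι → ℝ}
    {f : ι → ℝ → ℝ} {z δ : ℝ} (hτ : ∀ j, 0 ≤ τ j) (hf : ∀ j, ContDiffAt ℝ 2 (f j) 0)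
    (h0 : ∀ j, f j 0 = 0) (hd : ∀ j, deriv (f j) 0 ≠ 0) (hz : z < 0) (hδ : 0 < δ) (hδz : δ < -z)
    (hc : ∀ j, c j ≠ 0)
    (hmode : ∀ j, c j * (z + lam j) = deriv (f j) 0 * (c (σ j) * exp (-z * τ j)))
    (ha : ∀ j, a j * (1 - δ / (z + lam j)) = a (σ j) * exp (δ * τ j) + 1) :
    ∃ (T : ℝ) (x : ι → ℝ → ℝ), ∀ j, ContinuousOn (x j) (Ici T) ∧ (∀ t, x j t ≠ 0) ∧
      ∀ t, T + τ j < t →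
        HasDerivAt (x j) (-lam j * x j t + f j (x (σ j) (t - τ j))) t := by
  have hC (j : ι) : c (σ j) * exp (-z * τ j) ≠ 0 := mul_ne_zero (hc _) (exp_pos _).ne'
  choose G hGcont hGmono hG using fun j => exists_rescaled_field (hf j) (h0 j) (hd j) hz hδz (hC j)
  have hsmall (K : ι → ℝ) : ∀ᶠ S in atTop, ∀ j, K j * exp (-δ * S) ≤ 1 / 2 :=
    eventually_all.2 fun j => eventually_mul_exp_le (neg_neg_of_pos hδ) one_half_pos (K j)
  obtain ⟨S, hGS, ha₁, ha₂⟩ := ((eventually_forall_ge_atTop.2 (eventually_all.2 hG)).and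
    ((hsmall fun j => |a j|).and (hsmall fun j => |a (σ j)| * exp (δ * τ j)))).exists
  let P : BarrierSystem ι :=
    { next := σ, delay := τ, rate := fun j => z + lam j, field := G, coeff := a, decay := δ,
      start := S, delay_nonneg := hτ
      rate_ne_zero := fun j => right_ne_zero_of_mul ((hmode j).trans_ne (mul_ne_zero (hd j) (hC j)))
      continuous_field := hGcont, monotone_field := fun j s _ => hGmono j s
      abs_field_sub_le := fun j s hs w hw => (hGS s hs j w hw).1
      decay_nonneg := hδ.le, coeff_mul := ha, abs_coeff_mul_le := ha₁
      abs_delayed_coeff_mul_le := ha₂ }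
  obtain ⟨w, hw⟩ := P.exists_solution
  refine ⟨S, fun j t => c j * exp (z * t) * w j t, fun j => ?_⟩
  obtain ⟨hcont, hmem, hderiv⟩ := hw j
  refine ⟨(by fun_prop : Continuous fun t => c j * exp (z * t)).continuousOn.mul hcont,
    fun t => mul_ne_zero (mul_ne_zero (hc j) (exp_pos _).ne') (by linarith [(hmem t).1]),
    fun t ht => (hasDerivAt_mul_exp_mul (hderiv t ht)).congr_deriv ?_⟩
  have hvalue := (hGS t (by linarith [hτ j]) j _
    (Icc_subset_Icc (by norm_num) (by norm_num) ((hw (σ j)).2.1 (t - τ j)))).2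
  have hshift : c (σ j) * exp (z * (t - τ j)) = c (σ j) * exp (-z * τ j) * exp (z * t) := by
    rw [mul_assoc, ← exp_add]
    ring_nf
  simp only [hshift, hvalue]
  linear_combination (exp (z * t) * G j t (w (σ j) (t - τ j))) * hmode j

section Characteristic

/-- The characteristic function `χ_a` of the linearization at `0`, restricted to the real line. -/
noncomputable def characteristicFunction (n : ℕ) (lam : ℕ → ℝ) (τ a z : ℝ) : ℝ :=
  (∏ j ∈ Finset.range n, (z + lam j)) + a * exp (-τ * z)

variable {n : ℕ} {lam : ℕ → ℝ} {τ a z : ℝ}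

theorem analyticOnNhd_characteristicFunction :
    AnalyticOnNhd ℝ (characteristicFunction n lam τ a) univ := fun z _ =>
  (Finset.analyticAt_fun_prod _ fun _ _ => by fun_prop).add (by fun_prop)

theorem eventually_characteristicFunction_ne_zero (hn : 0 < n) (ha : a ≠ 0) (z : ℝ) :
    ∀ᶠ y in 𝓝[≠] z, characteristicFunction n lam τ a y ≠ 0 := by
  -- `χ_a` is analytic, and it is not identically zero because its product vanishes at `-lam 0`.
  have hvalue : characteristicFunction n lam τ a (-lam 0) = a * exp (-τ * -lam 0) := by
    rw [characteristicFunction,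
      Finset.prod_eq_zero (Finset.mem_range.2 hn) (neg_add_cancel (lam 0)), zero_add]
  have hχ := analyticOnNhd_characteristicFunction (n := n) (lam := lam) (τ := τ) (a := a)
  refine (hχ z trivial).eventually_eq_zero_or_eventually_ne_zero.resolve_left fun hz => ?_
  have hzero := hχ.eqOn_zero_of_preconnected_of_eventuallyEq_zero isPreconnected_univ trivial hz
  exact mul_ne_zero ha (exp_pos _).ne' (hvalue.symm.trans (hzero (mem_univ _)))

theorem exists_characteristicFunction_sub_ne_zero (hn : 0 < n) (ha : a ≠ 0) (z : ℝ) {ε : ℝ}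
    (hε : 0 < ε) : ∃ δ, 0 < δ ∧ δ < ε ∧ characteristicFunction n lam τ a (z - δ) ≠ 0 := by
  obtain ⟨y, hne, hlt, hyz⟩ := (((eventually_characteristicFunction_ne_zero hn ha z).filter_mono
    (nhdsLT_le_nhdsNE z)).and (Ioo_mem_nhdsLT (sub_lt_self z hε))).exists
  exact ⟨z - y, sub_pos.2 hyz, by linarith, by rwa [sub_sub_cancel]⟩

theorem prod_add_eq_of_characteristicFunction_eq_zero
    (hz : characteristicFunction n lam τ a z = 0) :
    ∏ j ∈ Finset.range n, (z + lam j) = -a * exp (-τ * z) := by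
  rw [neg_mul]
  exact eq_neg_of_add_eq_zero_left hz

theorem add_ne_zero_of_characteristicFunction_eq_zero (ha : a ≠ 0)
    (hz : characteristicFunction n lam τ a z = 0) {j : ℕ} (hj : j < n) : z + lam j ≠ 0 :=
  Finset.prod_ne_zero_iff.1 ((prod_add_eq_of_characteristicFunction_eq_zero hz).trans_ne
    (mul_ne_zero (neg_ne_zero.2 ha) (exp_pos _).ne')) j (Finset.mem_range.2 hj)

theorem neg_of_characteristicFunction_eq_zero (hlam : ∀ j < n, 0 < lam j) (ha : 0 < a)
    (hz : characteristicFunction n lam τ a z = 0) : z < 0 := by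
  by_contra! hz0
  refine hz.not_gt (add_pos (Finset.prod_pos fun j hj => ?_) (mul_pos ha (exp_pos _)))
  exact add_pos_of_nonneg_of_pos hz0 (hlam j (Finset.mem_range.1 hj))

end Characteristic

section CyclicRecursion

variable {k : ℕ} {lam : ℕ → ℝ} {τ θ z δ : ℝ}

/-- The delays of the cyclic system with components indexed by `Fin (k + 1)`, where `j + 1` wraps
around: only the last component reads its successor, the first one, with delay `τ`. -/
def wrapDelay (τ : ℝ) (j : Fin (k + 1)) : ℝ :=
  if j = Fin.last k then τ else 0

theorem wrapDelay_nonneg (hτ : 0 ≤ τ) (j : Fin (k + 1)) : 0 ≤ wrapDelay τ j := by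
  unfold wrapDelay
  split_ifs <;> simp [hτ]

theorem mul_exp_wrapDelay {y : ℕ → ℝ} (hy : y (k + 1) = y 0 * exp (θ * τ)) (j : Fin (k + 1)) :
    y (j + 1 : Fin (k + 1)) * exp (θ * wrapDelay τ j) = y (j + 1) := by
  rcases eq_or_ne j (Fin.last k) with rfl | hj
  · simp [wrapDelay, hy]
  · simp [wrapDelay, hj, Fin.val_add_one_of_lt (Fin.lt_last_iff_ne_last.2 hj)]

theorem exists_affine_recursion {K : Type*} [Field K] (p q : ℕ → K) {n : ℕ} {E : K}
    (hne : ∏ j ∈ Finset.range n, p j ≠ E) :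
    ∃ y : ℕ → K, (∀ j, y (j + 1) = p j * y j + q j) ∧ y n = y 0 * E := by
  let b : ℕ → K := Nat.rec 0 fun j b => p j * b + q j
  have hb (j : ℕ) : b (j + 1) = p j * b j + q j := rfl
  refine ⟨fun j => (∏ i ∈ Finset.range j, p i) * (b n / (E - ∏ j ∈ Finset.range n, p j)) + b j,
    fun j => ?_, ?_⟩
  · simp only [Finset.prod_range_succ, hb]
    ring
  · have : E - ∏ j ∈ Finset.range n, p j ≠ 0 := sub_ne_zero.2 hne.symm
    have hb0 : b 0 = 0 := rfl
    simp only [Finset.prod_range_zero, hb0]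
    field_simp
    ring

theorem exists_exponential_mode {d : ℕ → ℝ} (hd : ∀ j < k + 1, d j ≠ 0)
    (hz : characteristicFunction (k + 1) lam τ (-∏ j ∈ Finset.range (k + 1), d j) z = 0) :
    ∃ c : Fin (k + 1) → ℝ, (∀ j, c j ≠ 0) ∧
      ∀ j, c j * (z + lam j) = d j * (c (j + 1) * exp (-z * wrapDelay τ j)) := by
  have hD : ∏ j ∈ Finset.range (k + 1), d j ≠ 0 :=
    Finset.prod_ne_zero_iff.2 fun j hj => hd j (Finset.mem_range.1 hj)
  let y : ℕ → ℝ := fun j => ∏ i ∈ Finset.range j, (z + lam i) / d i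
  have hwrap : y (k + 1) = y 0 * exp (-z * τ) := by
    simp only [y, Finset.prod_range_zero, Finset.prod_div_distrib,
      prod_add_eq_of_characteristicFunction_eq_zero hz]
    rw [neg_neg, mul_div_cancel_left₀ _ hD]
    ring_nf
  refine ⟨fun j => y j, fun j => Finset.prod_ne_zero_iff.2 fun i hi => ?_, fun j => ?_⟩
  · have hi : i < k + 1 := (Finset.mem_range.1 hi).trans j.isLt
    exact div_ne_zero
      (add_ne_zero_of_characteristicFunction_eq_zero (neg_ne_zero.2 hD) hz hi) (hd i hi)
  · rw [mul_exp_wrapDelay hwrap, show y (j + 1) = y j * ((z + lam j) / d j) from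
      Finset.prod_range_succ _ _]
    field_simp [hd j j.isLt]

theorem exists_barrier_coefficients {a : ℝ} (ha : a ≠ 0)
    (hz : characteristicFunction (k + 1) lam τ a z = 0)
    (hzδ : characteristicFunction (k + 1) lam τ a (z - δ) ≠ 0) :
    ∃ b : Fin (k + 1) → ℝ, ∀ j,
      b j * (1 - δ / (z + lam j)) = b (j + 1) * exp (δ * wrapDelay τ j) + 1 := by
  have hne : ∏ j ∈ Finset.range (k + 1), (1 - δ / (z + lam j)) ≠ exp (δ * τ) := by
    intro heq
    refine hzδ ?_
    have hshift : ∏ j ∈ Finset.range (k + 1), (z - δ + lam j) =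
        (∏ j ∈ Finset.range (k + 1), (z + lam j)) * exp (δ * τ) := by
      rw [← heq, ← Finset.prod_mul_distrib]
      refine Finset.prod_congr rfl fun j hj => ?_
      field_simp [add_ne_zero_of_characteristicFunction_eq_zero ha hz (Finset.mem_range.1 hj)]
      ring
    have hexp : exp (-τ * (z - δ)) = exp (-τ * z) * exp (δ * τ) := by
      rw [← exp_add]
      ring_nf
    rw [characteristicFunction, hshift, hexp, ← mul_assoc, ← add_mul]
    exact mul_eq_zero_of_left hz _
  obtain ⟨y, hrec, hwrap⟩ := exists_affine_recursion _ (fun _ => -1) hne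
  refine ⟨fun j => y j, fun j => ?_⟩
  rw [mul_exp_wrapDelay hwrap, hrec]
  ring

theorem isCyclicSolution_of_fin {f : ℕ → ℝ → ℝ} {T : ℝ} {x : Fin (k + 1) → ℝ → ℝ} (hτ : 0 ≤ τ)
    (hcont : ∀ j, ContinuousOn (x j) (Ici T))
    (hderiv : ∀ j t, T + wrapDelay τ j < t → HasDerivAt (x j)
      (-lam j * x j t + f j (x (j + 1) (t - wrapDelay τ j))) t) :
    IsCyclicSolution (k + 1) lam τ f (T + τ) fun j => x (Fin.ofNat (k + 1) j) := by
  refine ⟨by simpa using hcont 0, fun j _ => (hcont _).mono (Ici_subset_Ici.2 (by linarith)),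
    fun t ht => ⟨fun j hj => ?_, ?_⟩⟩
  · have hval : (Fin.ofNat (k + 1) j : ℕ) = j := by
      rw [Fin.val_ofNat, Nat.mod_eq_of_lt (by omega)]
    have hlast : Fin.ofNat (k + 1) j ≠ Fin.last k := fun h => by
      simp only [Fin.ext_iff, hval, Fin.val_last] at h
      omega
    have hsucc : Fin.ofNat (k + 1) j + 1 = Fin.ofNat (k + 1) (j + 1) := by
      ext
      rw [Fin.val_add_one_of_lt (Fin.lt_last_iff_ne_last.2 hlast), hval, Fin.val_ofNat,
        Nat.mod_eq_of_lt hj]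
    have := hderiv (Fin.ofNat (k + 1) j) t
    simp only [wrapDelay, if_neg hlast, hval, hsucc, add_zero, sub_zero] at this
    exact this (by linarith)
  · have hlast : Fin.ofNat (k + 1) k = Fin.last k := by ext; simp
    have := hderiv (Fin.last k) t
    simp only [wrapDelay, if_true, Fin.val_last, Fin.last_add_one] at this
    simpa [hlast] using this ht

end CyclicRecursion

section Feedback

variable {f : ℝ → ℝ}

theorem map_zero_of_pos_feedback (hf : ContinuousAt f 0) (hpos : ∀ y, y ≠ 0 → 0 < y * f y) :
    f 0 = 0 := by
  refine le_antisymm (le_of_tendsto (hf.mono_left (nhdsWithin_le_nhds (s := Iio 0))) ?_)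
    (ge_of_tendsto (hf.mono_left (nhdsWithin_le_nhds (s := Ioi 0))) ?_)
  · filter_upwards [self_mem_nhdsWithin] with y (hy : y < 0)
    nlinarith [hpos y hy.ne]
  · filter_upwards [self_mem_nhdsWithin] with y (hy : 0 < y)
    exact (pos_of_mul_pos_right (hpos y hy.ne') hy.le).le

theorem deriv_nonneg_of_pos_feedback (hf : DifferentiableAt ℝ f 0)
    (hpos : ∀ y, y ≠ 0 → 0 < y * f y) : 0 ≤ deriv f 0 := by
  refine ge_of_tendsto hf.hasDerivAt.tendsto_slope ?_
  filter_upwards [self_mem_nhdsWithin] with y (hy : y ≠ 0)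
  have hslope : slope f 0 y = y * f y / y ^ 2 := by
    rw [slope_def_field, map_zero_of_pos_feedback hf.continuousAt hpos]
    field_simp
    ring
  rw [hslope]
  exact div_nonneg (hpos y hy).le (sq_nonneg y)

theorem map_zero_of_neg_feedback (hf : ContinuousAt f 0) (hneg : ∀ y, y ≠ 0 → y * f y < 0) :
    f 0 = 0 :=
  neg_eq_zero.1 <| map_zero_of_pos_feedback hf.neg fun y hy => by
    simpa only [Pi.neg_apply, mul_neg, neg_pos] using hneg y hy

theorem deriv_nonpos_of_neg_feedback (hf : DifferentiableAt ℝ f 0)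
    (hneg : ∀ y, y ≠ 0 → y * f y < 0) : deriv f 0 ≤ 0 := by
  have := deriv_nonneg_of_pos_feedback hf.neg fun y hy => by
    simpa only [Pi.neg_apply, mul_neg, neg_pos] using hneg y hy
  rwa [deriv.neg, neg_nonneg] at this

end Feedback

section CyclicFeedback

variable {n : ℕ} {f : ℕ → ℝ → ℝ}

theorem map_zero_of_cyclic_feedback (hf : ∀ j < n, ContinuousAt (f j) 0)
    (hpos : ∀ j < n - 1, ∀ y, y ≠ 0 → 0 < y * f j y)
    (hneg : ∀ y, y ≠ 0 → y * f (n - 1) y < 0) : ∀ j < n, f j 0 = 0 := by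
  intro j hj
  rcases (Nat.le_sub_one_of_lt hj).lt_or_eq with hlt | rfl
  · exact map_zero_of_pos_feedback (hf j hj) (hpos j hlt)
  · exact map_zero_of_neg_feedback (hf _ hj) hneg

theorem prod_deriv_neg_of_cyclic_feedback (hn : 0 < n)
    (hf : ∀ j < n, DifferentiableAt ℝ (f j) 0)
    (hpos : ∀ j < n - 1, ∀ y, y ≠ 0 → 0 < y * f j y)
    (hneg : ∀ y, y ≠ 0 → y * f (n - 1) y < 0) (hderiv : ∀ j < n, deriv (f j) 0 ≠ 0) :
    ∏ j ∈ Finset.range n, deriv (f j) 0 < 0 := by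
  obtain ⟨k, rfl⟩ := Nat.exists_eq_add_one_of_ne_zero hn.ne'
  rw [Finset.prod_range_succ]
  refine mul_neg_of_pos_of_neg (Finset.prod_pos fun j hj => ?_) ?_
  · have hj : j < k := Finset.mem_range.1 hj
    exact (deriv_nonneg_of_pos_feedback (hf j (by omega)) (hpos j hj)).lt_of_ne'
      (hderiv j (by omega))
  · exact (deriv_nonpos_of_neg_feedback (hf k k.lt_succ_self) hneg).lt_of_ne
      (hderiv k k.lt_succ_self)

end CyclicFeedback

theorem exists_nonoscillating_solution_of_real_root_general {n : ℕ} (hn : 0 < n) {lam : ℕ → ℝ}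
    {τ : ℝ} (hτ : 0 ≤ τ) {f : ℕ → ℝ → ℝ} (hC2 : ∀ j < n, ContDiffAt ℝ 2 (f j) 0)
    (h0 : ∀ j < n, f j 0 = 0) (hderiv0 : ∀ j < n, deriv (f j) 0 ≠ 0)
    (hreal : ∃ z < 0,
      characteristicFunction n lam τ (-∏ j ∈ Finset.range n, deriv (f j) 0) z = 0) :
    ∃ T : ℝ, ∃ x : ℕ → ℝ → ℝ, IsCyclicSolution n lam τ f T x ∧
      ∀ j < n, ∀ t : ℝ, T ≤ t → x j t ≠ 0 := by
  obtain ⟨z, hz0, hz⟩ := hreal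
  obtain ⟨k, rfl⟩ := Nat.exists_eq_add_one_of_ne_zero hn.ne'
  have ha : -∏ j ∈ Finset.range (k + 1), deriv (f j) 0 ≠ 0 := neg_ne_zero.2 <|
    Finset.prod_ne_zero_iff.2 fun j hj => hderiv0 j (Finset.mem_range.1 hj)
  obtain ⟨c, hc, hmode⟩ := exists_exponential_mode hderiv0 hz
  obtain ⟨δ, hδ, hδz, hzδ⟩ := exists_characteristicFunction_sub_ne_zero hn ha z (neg_pos.2 hz0)
  obtain ⟨b, hb⟩ := exists_barrier_coefficients ha hz hzδ
  obtain ⟨T, x, hx⟩ := exists_nonvanishing_solution (wrapDelay_nonneg hτ)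
    (fun j => hC2 j j.isLt) (fun j => h0 j j.isLt) (fun j => hderiv0 j j.isLt) hz0 hδ hδz hc
    hmode hb
  exact ⟨T + τ, _, isCyclicSolution_of_fin hτ (fun j => (hx j).1) fun j => (hx j).2.2,
    fun j _ t _ => (hx _).2.1 t⟩

/-- Theorem 3: if each `fⱼ` is `C²` near `0` with `fⱼ'(0) ≠ 0` and the
characteristic equation `(z+λ₁)⋯(z+λₙ) + a e^{-τz} = 0` with
`a = -f₁'(0)⋯fₙ'(0)` has a real root, then the cyclic system has a
non-oscillating nonzero solution on some `[T, ∞)`: all its components are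
nonzero for all `t ≥ T`. -/
theorem exists_nonoscillating_solution_of_real_root
    (n : ℕ) (hn : 0 < n) (lam : ℕ → ℝ) (hlam : ∀ j < n, 0 < lam j)
    (τ : ℝ) (hτ : 0 < τ) (f : ℕ → ℝ → ℝ) (hf : ∀ j < n, Continuous (f j))
    (hpos : ∀ j < n - 1, ∀ y : ℝ, y ≠ 0 → 0 < y * f j y)
    (hneg : ∀ y : ℝ, y ≠ 0 → y * f (n - 1) y < 0)
    (hC2 : ∀ j < n, ContDiffAt ℝ 2 (f j) 0)
    (hderiv0 : ∀ j < n, deriv (f j) 0 ≠ 0)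
    (hreal : ∃ z : ℝ,
      (∏ j ∈ Finset.range n, (z + lam j))
        + (-(∏ j ∈ Finset.range n, deriv (f j) 0)) * Real.exp (-τ * z) = 0) :
    ∃ T : ℝ, ∃ x : ℕ → ℝ → ℝ, IsCyclicSolution n lam τ f T x ∧
      ∀ j < n, ∀ t : ℝ, T ≤ t → x j t ≠ 0 := by
  obtain ⟨z, hz⟩ := hreal
  have hdiff (j : ℕ) (hj : j < n) := (hC2 j hj).differentiableAt two_ne_zero
  have hcoeff := prod_deriv_neg_of_cyclic_feedback hn hdiff hpos hneg hderiv0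
  exact exists_nonoscillating_solution_of_real_root_general hn hτ.le hC2
    (map_zero_of_cyclic_feedback (fun j hj => (hdiff j hj).continuousAt) hpos hneg) hderiv0
    ⟨z, neg_of_characteristicFunction_eq_zero hlam (neg_pos.2 hcoeff) hz, hz⟩
end
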